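/- arXiv:1811.10913 — 6 statements merged into one kernel-verified Lean document; each statement's English description precedes it below -/
import Mathlib

section
/- In the algebra O(S³), the subalgebra B of elements of total degree 0 is generated as a ℂ-algebra by the three elements z := 2 z₁ z₂*, z* := 2 z₁* z₂ and x := z₁* z₁ − z₂* z₂; these satisfy z* z + x² = 1, and the ℂ-algebra homomorphism from ℂ[X, Z, W]/(W Z + X² − 1) to B sending X ↦ x, Z ↦ z, W ↦ z* is an isomorphism. In particular, B is isomorphic to O(S²), the coordinate algebra of the algebraic 2-sphere. -/
/-!
Generation. By the uniqueness half of its universal property, `O(S³)` is spanned by the monomials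
`z₁ᵃ z₂ᵇ z₁*ᶜ z₂*ᵈ`. Such a monomial is homogeneous of total degree `a + b - c - d`, so an element
of total degree `0` is a combination of those with `a + b = c + d` (`totalDeg_zero_le`). These
are products of `z₁ z₁*`, `z₂ z₂*`, `z₁ z₂*`, `z₁* z₂` (`balanced_monomial_mem`), that is, of
`(1 + x)/2`, `(1 - x)/2`, `z/2`, `z*/2`.

Injectivity. In `O(S²)` the element `Z` is a nonzerodivisor (`OS2_Z_regular`) and `Z W = 1 - X²`,
so a suitable power of `Z` multiplies any element into `ℂ[X, Z]` (`OS2_clear_W`). Hence a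
homomorphism out of `O(S²)` is injective once the images of `X` and `Z` are algebraically
independent (`OS2hom_injective`). That `x` and `z` are algebraically independent in `O(S³)` is
seen by mapping `O(S³)` to the field `ℂ(X, Z)` through a rational section of the Hopf fibration
(`algebraicIndependent_x_z`).
-/

open scoped TensorProduct
noncomputable section

/-- The total-degree-`n` component of a `ℤ²`-graded module (total degree of a
`ℤ²`-homogeneous element of degree `(m₁,m₂)` is `m₁+m₂`). -/
def totalDeg {A : Type} [AddCommMonoid A] [Module ℂ A]
    (𝒜 : ℤ × ℤ → Submodule ℂ A) (n : ℤ) : Submodule ℂ A :=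
  ⨆ (p : ℤ × ℤ) (_ : p.1 + p.2 = n), 𝒜 p

/-- The defining ideal of `O(S²) = ℂ[X, Z, W]/(W Z + X² − 1)`,
with variables `0 ↦ X`, `1 ↦ Z`, `2 ↦ W`. -/
def OS2ideal : Ideal (MvPolynomial (Fin 3) ℂ) :=
  Ideal.span {MvPolynomial.X 2 * MvPolynomial.X 1 + MvPolynomial.X 0 ^ 2 - 1}

def OS2 : Type :=
  MvPolynomial (Fin 3) ℂ ⧸ OS2ideal

instance : CommRing OS2 := by unfold OS2; infer_instance
instance : Algebra ℂ OS2 := by unfold OS2; infer_instance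

/-- The canonical images of the variables `X`, `Z`, `W` in `O(S²)`. -/
def OS2mk (i : Fin 3) : OS2 :=
  Ideal.Quotient.mk OS2ideal (MvPolynomial.X i)

/-- The canonical projection `ℂ[X, Z, W] → O(S²)`. -/
def OS2proj : MvPolynomial (Fin 3) ℂ →ₐ[ℂ] OS2 :=
  { toFun := fun P => Ideal.Quotient.mk OS2ideal P
    map_one' := rfl
    map_mul' := fun _ _ => rfl
    map_zero' := rfl
    map_add' := fun _ _ => rfl
    commutes' := fun _ => rfl }

theorem OS2proj_X (i : Fin 3) : OS2proj (MvPolynomial.X i) = OS2mk i := rfl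

theorem OS2proj_surjective : Function.Surjective OS2proj :=
  Ideal.Quotient.mk_surjective

theorem OS2proj_eq_zero_iff (P : MvPolynomial (Fin 3) ℂ) :
    OS2proj P = 0 ↔ MvPolynomial.X 2 * MvPolynomial.X 1 + MvPolynomial.X 0 ^ 2 - 1 ∣ P := by
  rw [← Ideal.mem_span_singleton]
  exact Ideal.Quotient.eq_zero_iff_mem (I := OS2ideal)

theorem OS2_rel : OS2mk 2 * OS2mk 1 + OS2mk 0 ^ 2 = 1 := by
  have h := (OS2proj_eq_zero_iff _).2 (dvd_refl _)
  simp only [map_sub, map_add, map_mul, map_pow, map_one, OS2proj_X] at h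
  exact sub_eq_zero.1 h

/-- The homomorphism out of `O(S²)` determined by three elements satisfying its relation. -/
def OS2lift {C : Type} [CommRing C] [Algebra ℂ C] (x z w : C) (h : w * z + x ^ 2 = 1) :
    OS2 →ₐ[ℂ] C :=
  let g : MvPolynomial (Fin 3) ℂ ⧸ OS2ideal →ₐ[ℂ] C :=
    Ideal.Quotient.liftₐ OS2ideal (MvPolynomial.aeval ![x, z, w]) (by
      intro a ha
      obtain ⟨b, rfl⟩ := Ideal.mem_span_singleton.1 ha
      simp [h])
  { toFun := fun a => g a
    map_one' := map_one g
    map_mul' := map_mul g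
    map_zero' := map_zero g
    map_add' := map_add g
    commutes' := g.commutes }

theorem OS2lift_mk {C : Type} [CommRing C] [Algebra ℂ C] (x z w : C)
    (h : w * z + x ^ 2 = 1) (i : Fin 3) : OS2lift x z w h (OS2mk i) = ![x, z, w] i := by
  change MvPolynomial.aeval ![x, z, w] (MvPolynomial.X i) = _
  simp

theorem OS2hom_comp_proj {C : Type} [CommRing C] [Algebra ℂ C] (f : OS2 →ₐ[ℂ] C) :
    f.comp OS2proj = MvPolynomial.aeval fun i => f (OS2mk i) := by
  ext i
  simp [OS2proj_X]

theorem OS2hom_range {C : Type} [CommRing C] [Algebra ℂ C] (f : OS2 →ₐ[ℂ] C) :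
    f.range = Algebra.adjoin ℂ {f (OS2mk 1), f (OS2mk 2), f (OS2mk 0)} := by
  have h1 : f.range = (f.comp OS2proj).range := by
    rw [AlgHom.range_comp, AlgHom.range_eq_top OS2proj |>.2 OS2proj_surjective,
      Algebra.map_top]
  rw [h1, OS2hom_comp_proj, ← Algebra.adjoin_range_eq_range_aeval]
  congr 1
  ext a
  simp only [Set.mem_range, Fin.exists_fin_succ, Set.mem_insert_iff, Set.mem_singleton_iff]
  simp
  tauto

/-- `Z` is a nonzerodivisor in `O(S²)`: the polynomial `Z` is prime and does not divide
`W Z + X² - 1`. -/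
theorem OS2_Z_regular (g : OS2) (h : OS2mk 1 * g = 0) : g = 0 := by
  obtain ⟨P, rfl⟩ := OS2proj_surjective g
  rw [← OS2proj_X, ← map_mul, OS2proj_eq_zero_iff] at h
  obtain ⟨K, hK⟩ := h
  have hp : Prime (MvPolynomial.X 1 : MvPolynomial (Fin 3) ℂ) := MvPolynomial.X_prime
  have hd : (MvPolynomial.X 1 : MvPolynomial (Fin 3) ℂ) ∣ K := by
    refine (hp.dvd_or_dvd (Dvd.intro _ hK)).resolve_left ?_
    rintro ⟨Q, hQ⟩
    have := congrArg (MvPolynomial.eval (0 : Fin 3 → ℂ)) hQ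
    simp at this
  obtain ⟨K', rfl⟩ := hd
  rw [OS2proj_eq_zero_iff]
  refine ⟨K', mul_left_cancel₀ hp.ne_zero ?_⟩
  rw [hK]; ring

theorem OS2_Z_pow_regular (N : ℕ) (g : OS2) (h : OS2mk 1 ^ N * g = 0) : g = 0 := by
  induction N with
  | zero => simpa using h
  | succ N ih => exact ih (OS2_Z_regular _ (by rw [← h]; ring))

/-- Multiplying by a power of `Z` eliminates `W`, because `Z W = 1 - X²`. -/
theorem OS2_clear_W (g : OS2) : ∃ (N : ℕ) (p : MvPolynomial (Fin 2) ℂ),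
    OS2mk 1 ^ N * g = MvPolynomial.aeval ![OS2mk 0, OS2mk 1] p := by
  obtain ⟨P, rfl⟩ := OS2proj_surjective g
  induction P using MvPolynomial.induction_on with
  | C a =>
    refine ⟨0, MvPolynomial.C a, ?_⟩
    rw [← MvPolynomial.algebraMap_eq, ← MvPolynomial.algebraMap_eq]
    simp only [AlgHom.commutes, pow_zero, one_mul]
  | add P Q hP hQ =>
    obtain ⟨N, p, hp⟩ := hP
    obtain ⟨M, q, hq⟩ := hQ
    refine ⟨N + M, MvPolynomial.X 1 ^ M * p + MvPolynomial.X 1 ^ N * q, ?_⟩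
    simp only [map_add, map_mul, map_pow, MvPolynomial.aeval_X, ← hp, ← hq]
    simp
    ring
  | mul_X P i hP =>
    obtain ⟨N, p, hp⟩ := hP
    fin_cases i
    · refine ⟨N, p * MvPolynomial.X 0, ?_⟩
      simp only [map_mul, MvPolynomial.aeval_X, ← hp, OS2proj_X]
      simp
      ring
    · refine ⟨N, p * MvPolynomial.X 1, ?_⟩
      simp only [map_mul, MvPolynomial.aeval_X, ← hp, OS2proj_X]
      simp
      ring
    · refine ⟨N + 1, p * (1 - MvPolynomial.X 0 ^ 2), ?_⟩
      simp only [map_mul, map_sub, map_pow, map_one, MvPolynomial.aeval_X, ← hp, OS2proj_X]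
      simp
      linear_combination (OS2mk 1 ^ N * OS2proj P) * OS2_rel

/-- If `f g = 0`, then some `Z ^ N * g` is a polynomial in `X` and `Z` killed by `f`, hence zero,
and `Z` is regular. -/
theorem OS2hom_injective {C : Type} [CommRing C] [Algebra ℂ C] (f : OS2 →ₐ[ℂ] C)
    (h : AlgebraicIndependent ℂ ![f (OS2mk 0), f (OS2mk 1)]) : Function.Injective f := by
  rw [injective_iff_map_eq_zero]
  intro g hg
  obtain ⟨N, p, hp⟩ := OS2_clear_W g
  have h0 : MvPolynomial.aeval ![f (OS2mk 0), f (OS2mk 1)] p = 0 := by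
    have e : (MvPolynomial.aeval ![f (OS2mk 0), f (OS2mk 1)] : MvPolynomial (Fin 2) ℂ →ₐ[ℂ] C)
        = f.comp (MvPolynomial.aeval ![OS2mk 0, OS2mk 1]) := by
      ext i
      fin_cases i <;> simp
    rw [e, AlgHom.comp_apply, ← hp, map_mul, hg, mul_zero]
  have hp0 : p = 0 := (injective_iff_map_eq_zero _).1 h p h0
  rw [hp0, map_zero] at hp
  exact OS2_Z_pow_regular N g hp

theorem totalDeg_zero_mul {A : Type} [CommRing A] [Algebra ℂ A]
    (𝒜 : ℤ × ℤ → Submodule ℂ A) [GradedAlgebra 𝒜] {a b : A}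
    (ha : a ∈ totalDeg 𝒜 0) (hb : b ∈ totalDeg 𝒜 0) : a * b ∈ totalDeg 𝒜 0 := by
  have hle : totalDeg 𝒜 0 * totalDeg 𝒜 0 ≤ totalDeg 𝒜 0 := by
    conv_lhs => unfold totalDeg
    simp only [Submodule.iSup_mul, Submodule.mul_iSup, iSup_le_iff]
    intro q hq p hp
    refine Submodule.mul_le.2 fun m hm n hn => ?_
    refine (le_iSup₂_of_le (f := fun (r : ℤ × ℤ) (_ : r.1 + r.2 = 0) => 𝒜 r)
      (p + q) ?_ le_rfl) (SetLike.mul_mem_graded hm hn)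
    simp only [Prod.fst_add, Prod.snd_add]
    omega
  exact hle (Submodule.mul_mem_mul ha hb)

theorem mem_totalDeg_zero {A : Type} [AddCommMonoid A] [Module ℂ A]
    (𝒜 : ℤ × ℤ → Submodule ℂ A) {p : ℤ × ℤ} (hp : p.1 + p.2 = 0) {a : A} (ha : a ∈ 𝒜 p) :
    a ∈ totalDeg 𝒜 0 :=
  (le_iSup₂_of_le (f := fun (r : ℤ × ℤ) (_ : r.1 + r.2 = 0) => 𝒜 r) p hp le_rfl) ha

/-- A balanced monomial factors into the degree-zero quadratic monomials. -/
theorem balanced_monomial_mem {A : Type} [CommRing A] [Algebra ℂ A] (S : Subalgebra ℂ A)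
    {z1 z2 z1s z2s : A} (h11 : z1 * z1s ∈ S) (h22 : z2 * z2s ∈ S) (h12 : z1 * z2s ∈ S)
    (h21 : z1s * z2 ∈ S) {a b c d : ℕ} (h : a + b = c + d) :
    z1 ^ a * z2 ^ b * z1s ^ c * z2s ^ d ∈ S := by
  rcases le_total a c with hac | hac
  · obtain ⟨k, rfl⟩ := Nat.exists_eq_add_of_le hac
    obtain rfl : b = d + k := by omega
    have e : z1 ^ a * z2 ^ (d + k) * z1s ^ (a + k) * z2s ^ d
        = (z1 * z1s) ^ a * (z2 * z2s) ^ d * (z1s * z2) ^ k := by ring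
    rw [e]
    exact mul_mem (mul_mem (pow_mem h11 _) (pow_mem h22 _)) (pow_mem h21 _)
  · obtain ⟨k, rfl⟩ := Nat.exists_eq_add_of_le hac
    obtain rfl : d = b + k := by omega
    have e : z1 ^ (c + k) * z2 ^ b * z1s ^ c * z2s ^ (b + k)
        = (z1 * z1s) ^ c * (z2 * z2s) ^ b * (z1 * z2s) ^ k := by ring
    rw [e]
    exact mul_mem (mul_mem (pow_mem h11 _) (pow_mem h22 _)) (pow_mem h12 _)

/-- If `z₁, z₂, z₁*, z₂*` generate the algebra, every element of total degree `0` lies in each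
subalgebra containing the degree-zero quadratic monomials: homogeneous components of a linear
combination of monomials are linear combinations of the monomials of that degree. -/
theorem totalDeg_zero_le {A : Type} [CommRing A] [Algebra ℂ A]
    (𝒜 : ℤ × ℤ → Submodule ℂ A) [GradedAlgebra 𝒜] {z1 z2 z1s z2s : A}
    (hz1 : z1 ∈ 𝒜 (1, 0)) (hz2 : z2 ∈ 𝒜 (0, 1))
    (hz1s : z1s ∈ 𝒜 (-1, 0)) (hz2s : z2s ∈ 𝒜 (0, -1))
    (hgen : Algebra.adjoin ℂ (Set.range ![z1, z2, z1s, z2s]) = ⊤) (S : Subalgebra ℂ A)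
    (h11 : z1 * z1s ∈ S) (h22 : z2 * z2s ∈ S) (h12 : z1 * z2s ∈ S) (h21 : z1s * z2 ∈ S) :
    totalDeg 𝒜 0 ≤ S.toSubmodule := by
  have key : ∀ (P : MvPolynomial (Fin 4) ℂ) (p : ℤ × ℤ), p.1 + p.2 = 0 →
      (DirectSum.decompose 𝒜 (MvPolynomial.aeval ![z1, z2, z1s, z2s] P) p : A) ∈ S := by
    intro P p hp
    induction P using MvPolynomial.induction_on' with
    | monomial u r =>
      have e : MvPolynomial.aeval ![z1, z2, z1s, z2s] (MvPolynomial.monomial u r)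
          = r • (z1 ^ u 0 * z2 ^ u 1 * z1s ^ u 2 * z2s ^ u 3) := by
        rw [MvPolynomial.aeval_monomial, Finsupp.prod_fintype _ _ (by simp),
          Fin.prod_univ_four, Algebra.smul_def]
        rfl
      have hm : r • (z1 ^ u 0 * z2 ^ u 1 * z1s ^ u 2 * z2s ^ u 3) ∈
          𝒜 (u 0 • (1, 0) + u 1 • (0, 1) + u 2 • (-1, 0) + u 3 • (0, -1)) :=
        Submodule.smul_mem _ _ (SetLike.mul_mem_graded (SetLike.mul_mem_graded
          (SetLike.mul_mem_graded (SetLike.pow_mem_graded _ hz1) (SetLike.pow_mem_graded _ hz2))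
          (SetLike.pow_mem_graded _ hz1s)) (SetLike.pow_mem_graded _ hz2s))
      rw [e]
      by_cases hq : (u 0 • (1, 0) + u 1 • (0, 1) + u 2 • (-1, 0) + u 3 • (0, -1) : ℤ × ℤ) = p
      · subst hq
        rw [DirectSum.decompose_of_mem_same 𝒜 hm]
        refine S.smul_mem (balanced_monomial_mem S h11 h22 h12 h21 ?_) r
        simp at hp
        omega
      · rw [DirectSum.decompose_of_mem_ne 𝒜 hm hq]
        exact zero_mem S
    | add P Q hP hQ =>
      rw [map_add, DirectSum.decompose_add]
      exact add_mem hP hQ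
  refine iSup₂_le fun p hp a ha => ?_
  have hsurj : a ∈ (MvPolynomial.aeval (R := ℂ) ![z1, z2, z1s, z2s]).range := by
    rw [← Algebra.adjoin_range_eq_range_aeval, hgen]
    trivial
  obtain ⟨P, hP⟩ := hsurj
  have := key P p hp
  replace hP : MvPolynomial.aeval ![z1, z2, z1s, z2s] P = a := hP
  rw [hP, DirectSum.decompose_of_mem_same 𝒜 ha] at this
  exact this

/-- The uniqueness part of the universal property of `O(S³)` makes its four generators
generate. -/
theorem adjoin_eq_top_of_univ {A : Type} [CommRing A] [Algebra ℂ A] (z1 z2 z1s z2s : A)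
    (hrel : z1s * z1 + z2s * z2 = 1)
    (huniv : ∀ (C : Type) [CommRing C] [Algebra ℂ C] (w1 w2 w1s w2s : C),
      w1s * w1 + w2s * w2 = 1 →
      ∃! f : A →ₐ[ℂ] C, f z1 = w1 ∧ f z2 = w2 ∧ f z1s = w1s ∧ f z2s = w2s) :
    Algebra.adjoin ℂ (Set.range ![z1, z2, z1s, z2s]) = ⊤ := by
  set T := Algebra.adjoin ℂ (Set.range ![z1, z2, z1s, z2s]) with hT
  have hmem : ∀ i, ![z1, z2, z1s, z2s] i ∈ T := fun i =>
    Algebra.subset_adjoin (Set.mem_range_self i)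
  obtain ⟨g, ⟨g1, g2, g3, g4⟩, -⟩ := huniv T ⟨z1, hmem 0⟩ ⟨z2, hmem 1⟩ ⟨z1s, hmem 2⟩
    ⟨z2s, hmem 3⟩ (Subtype.ext hrel)
  have hid : T.val.comp g = AlgHom.id ℂ A :=
    (huniv A z1 z2 z1s z2s hrel).unique (by simp [g1, g2, g3, g4]) (by simp)
  rw [eq_top_iff]
  intro a _
  have := DFunLike.congr_fun hid a
  rw [← show ((g a : T) : A) = a from this]
  exact (g a).2

/-- The Hopf fibration has a rational section: for `X`, `Z` in a field, `Z ≠ 0`, and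
`W = (1 - X²) / Z`, the point `(z₁, z₂, z₁*, z₂*) = (1, (1 - X) / Z, (1 + X) / 2, Z / 2)` lies
on `S³` and maps to `(X, Z, W)`. -/
theorem exists_hopf_section {A : Type} [CommRing A] [Algebra ℂ A] (z1 z2 z1s z2s : A)
    (huniv : ∀ (C : Type) [CommRing C] [Algebra ℂ C] (w1 w2 w1s w2s : C),
      w1s * w1 + w2s * w2 = 1 →
      ∃! f : A →ₐ[ℂ] C, f z1 = w1 ∧ f z2 = w2 ∧ f z1s = w1s ∧ f z2s = w2s)
    {K : Type} [Field K] [Algebra ℂ K] (X Z : K) (hZ : Z ≠ 0) :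
    ∃ φ : A →ₐ[ℂ] K, φ (z1s * z1 - z2s * z2) = X ∧ φ (2 * (z1 * z2s)) = Z := by
  have h2 : (2 : K) ≠ 0 := by
    have := (algebraMap ℂ K).injective.ne (two_ne_zero (α := ℂ))
    rwa [map_zero, map_ofNat] at this
  obtain ⟨φ, ⟨e1, e2, e3, e4⟩, -⟩ := huniv K 1 ((1 - X) / Z) ((1 + X) / 2) (Z / 2)
    (by field_simp; ring)
  refine ⟨φ, ?_, ?_⟩
  · simp only [map_sub, map_mul, e1, e2, e3, e4]
    field_simp
    ring
  · simp only [map_mul, map_ofNat, e1, e4]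
    field_simp

/-- The section of the Hopf fibration over the generic point of the sphere, with coordinates in
the field `ℂ(X, Z)`, sends `x` and `z` to the independent variables `X` and `Z`. -/
theorem algebraicIndependent_x_z {A : Type} [CommRing A] [Algebra ℂ A] (z1 z2 z1s z2s : A)
    (huniv : ∀ (C : Type) [CommRing C] [Algebra ℂ C] (w1 w2 w1s w2s : C),
      w1s * w1 + w2s * w2 = 1 →
      ∃! f : A →ₐ[ℂ] C, f z1 = w1 ∧ f z2 = w2 ∧ f z1s = w1s ∧ f z2s = w2s) :
    AlgebraicIndependent ℂ ![z1s * z1 - z2s * z2, 2 * (z1 * z2s)] := by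
  let R := MvPolynomial (Fin 2) ℂ
  let K := FractionRing R
  have hinj : Function.Injective (algebraMap R K) := IsFractionRing.injective R K
  have hZ : algebraMap R K (MvPolynomial.X 1) ≠ 0 := by
    intro h
    exact MvPolynomial.X_ne_zero (R := ℂ) (1 : Fin 2) (hinj (by rw [map_zero]; exact h))
  obtain ⟨φ, hx, hz⟩ := exists_hopf_section z1 z2 z1s z2s huniv
    (algebraMap R K (MvPolynomial.X 0)) (algebraMap R K (MvPolynomial.X 1)) hZ
  have hφ : φ.comp (MvPolynomial.aeval ![z1s * z1 - z2s * z2, 2 * (z1 * z2s)])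
      = IsScalarTower.toAlgHom ℂ R K := by
    ext i
    rw [AlgHom.comp_apply, MvPolynomial.aeval_X]
    fin_cases i
    · exact hx
    · exact hz
  have hcomp : Function.Injective
      (φ.comp (MvPolynomial.aeval ![z1s * z1 - z2s * z2, 2 * (z1 * z2s)])) := by
    rw [hφ]; exact hinj
  rw [AlgHom.coe_comp] at hcomp
  exact hcomp.of_comp

/-- In `O(S³)` (the commutative `ℂ`-algebra on `z₁, z₂, z₁*, z₂*` with relation
`z₁* z₁ + z₂* z₂ = 1`, `ℤ²`-graded with `deg z₁ = (1,0)`, `deg z₂ = (0,1)`,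
`deg z₁* = (−1,0)`, `deg z₂* = (0,−1)`, and pinned down by its universal property),
the subalgebra `B` of total-degree-`0` elements is generated as a `ℂ`-algebra by
`z := 2 z₁ z₂*`, `z* := 2 z₁* z₂` and `x := z₁* z₁ − z₂* z₂`; these satisfy
`z* z + x² = 1`, and the `ℂ`-algebra homomorphism `ℂ[X,Z,W]/(WZ+X²−1) → B` sending
`X ↦ x`, `Z ↦ z`, `W ↦ z*` is an isomorphism; in particular `B ≅ O(S²)`. -/
theorem classical_coinvariants_are_OS2
    (A : Type) [CommRing A] [Algebra ℂ A]
    (𝒜 : ℤ × ℤ → Submodule ℂ A) [GradedAlgebra 𝒜]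
    (z1 z2 z1s z2s : A)
    (hz1 : z1 ∈ 𝒜 (1, 0)) (hz2 : z2 ∈ 𝒜 (0, 1))
    (hz1s : z1s ∈ 𝒜 (-1, 0)) (hz2s : z2s ∈ 𝒜 (0, -1))
    (hrel : z1s * z1 + z2s * z2 = 1)
    (huniv : ∀ (C : Type) [CommRing C] [Algebra ℂ C] (w1 w2 w1s w2s : C),
      w1s * w1 + w2s * w2 = 1 →
      ∃! f : A →ₐ[ℂ] C, f z1 = w1 ∧ f z2 = w2 ∧ f z1s = w1s ∧ f z2s = w2s) :
    (Algebra.adjoin ℂ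
        ({2 * (z1 * z2s), 2 * (z1s * z2), z1s * z1 - z2s * z2} : Set A)).toSubmodule
      = totalDeg 𝒜 0 ∧
    (2 * (z1s * z2)) * (2 * (z1 * z2s)) + (z1s * z1 - z2s * z2) ^ 2 = 1 ∧
    (∃ f : OS2 →ₐ[ℂ] A,
      f (OS2mk 0) = z1s * z1 - z2s * z2 ∧ f (OS2mk 1) = 2 * (z1 * z2s) ∧
        f (OS2mk 2) = 2 * (z1s * z2)) ∧
    (∀ f : OS2 →ₐ[ℂ] A,
      (f (OS2mk 0) = z1s * z1 - z2s * z2 ∧ f (OS2mk 1) = 2 * (z1 * z2s) ∧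
        f (OS2mk 2) = 2 * (z1s * z2)) →
      Function.Injective f ∧ (f.range).toSubmodule = totalDeg 𝒜 0) ∧
    Nonempty (OS2 ≃ₐ[ℂ] ↥(Algebra.adjoin ℂ
        ({2 * (z1 * z2s), 2 * (z1s * z2), z1s * z1 - z2s * z2} : Set A))) := by
  have hquad : (2 * (z1s * z2)) * (2 * (z1 * z2s)) + (z1s * z1 - z2s * z2) ^ 2 = 1 := by
    linear_combination (z1s * z1 + z2s * z2 + 1) * hrel
  have hadj : (Algebra.adjoin ℂ
      ({2 * (z1 * z2s), 2 * (z1s * z2), z1s * z1 - z2s * z2} : Set A)).toSubmodule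
        = totalDeg 𝒜 0 := by
    refine le_antisymm ?_ ?_
    · have d12 : z1 * z2s ∈ totalDeg 𝒜 0 :=
        mem_totalDeg_zero 𝒜 (by simp) (SetLike.mul_mem_graded hz1 hz2s)
      have d21 : z1s * z2 ∈ totalDeg 𝒜 0 :=
        mem_totalDeg_zero 𝒜 (by simp) (SetLike.mul_mem_graded hz1s hz2)
      have d11 : z1s * z1 ∈ totalDeg 𝒜 0 :=
        mem_totalDeg_zero 𝒜 (by simp) (SetLike.mul_mem_graded hz1s hz1)
      have d22 : z2s * z2 ∈ totalDeg 𝒜 0 :=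
        mem_totalDeg_zero 𝒜 (by simp) (SetLike.mul_mem_graded hz2s hz2)
      have hone : (1 : A) ∈ totalDeg 𝒜 0 :=
        mem_totalDeg_zero 𝒜 (p := 0) (by simp) SetLike.GradedOne.one_mem
      intro a ha
      rw [Subalgebra.mem_toSubmodule] at ha
      induction ha using Algebra.adjoin_induction with
      | mem y hy =>
        rcases hy with rfl | rfl | rfl
        · rw [two_mul]; exact add_mem d12 d12
        · rw [two_mul]; exact add_mem d21 d21
        · exact sub_mem d11 d22
      | algebraMap r =>
        rw [Algebra.algebraMap_eq_smul_one]
        exact Submodule.smul_mem _ r hone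
      | add y y' _ _ hy hy' => exact add_mem hy hy'
      | mul y y' _ _ hy hy' => exact totalDeg_zero_mul 𝒜 hy hy'
    · set S := Algebra.adjoin ℂ
        ({2 * (z1 * z2s), 2 * (z1s * z2), z1s * z1 - z2s * z2} : Set A) with hS
      have half : ∀ y : A, 2 * y ∈ S → y ∈ S := by
        intro y hy
        have := S.smul_mem hy (1 / 2 : ℂ)
        rwa [← map_ofNat (algebraMap ℂ A) 2, ← Algebra.smul_def, smul_smul,
          one_div, inv_mul_cancel₀ two_ne_zero, one_smul] at this
      have hx : z1s * z1 - z2s * z2 ∈ S := Algebra.subset_adjoin (by simp)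
      refine totalDeg_zero_le 𝒜 hz1 hz2 hz1s hz2s
        (adjoin_eq_top_of_univ z1 z2 z1s z2s hrel huniv) S (half _ ?_) (half _ ?_)
        (half _ (Algebra.subset_adjoin (by simp))) (half _ (Algebra.subset_adjoin (by simp)))
      · have e : 2 * (z1 * z1s) = 1 + (z1s * z1 - z2s * z2) := by
          linear_combination hrel
        rw [e]; exact add_mem (one_mem S) hx
      · have e : 2 * (z2 * z2s) = 1 - (z1s * z1 - z2s * z2) := by
          linear_combination hrel
        rw [e]; exact sub_mem (one_mem S) hx
  have hall : ∀ f : OS2 →ₐ[ℂ] A,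
      (f (OS2mk 0) = z1s * z1 - z2s * z2 ∧ f (OS2mk 1) = 2 * (z1 * z2s) ∧
        f (OS2mk 2) = 2 * (z1s * z2)) →
      Function.Injective f ∧ f.range = Algebra.adjoin ℂ
        ({2 * (z1 * z2s), 2 * (z1s * z2), z1s * z1 - z2s * z2} : Set A) := by
    rintro f ⟨f0, f1, f2⟩
    refine ⟨OS2hom_injective f ?_, ?_⟩
    · rw [f0, f1]; exact algebraicIndependent_x_z z1 z2 z1s z2s huniv
    · rw [OS2hom_range, f0, f1, f2]
  have hex : ∃ f : OS2 →ₐ[ℂ] A,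
      f (OS2mk 0) = z1s * z1 - z2s * z2 ∧ f (OS2mk 1) = 2 * (z1 * z2s) ∧
        f (OS2mk 2) = 2 * (z1s * z2) :=
    ⟨OS2lift _ _ _ hquad, OS2lift_mk _ _ _ hquad 0, OS2lift_mk _ _ _ hquad 1,
      OS2lift_mk _ _ _ hquad 2⟩
  refine ⟨hadj, hquad, hex, fun f hf => ⟨(hall f hf).1, by rw [(hall f hf).2, hadj]⟩, ?_⟩
  obtain ⟨f, hf⟩ := hex
  obtain ⟨hinj, hrange⟩ := hall f hf
  exact ⟨(AlgEquiv.ofInjective f hinj).trans (Subalgebra.equivOfEq _ _ hrange)⟩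
end
end

section
/- The algebra A = O(S³), graded by total degree, is strongly ℤ-graded: for every m, n ∈ ℤ the ℂ-span of the products {a b : a ∈ A⁽ᵐ⁾, b ∈ A⁽ⁿ⁾} equals A⁽ᵐ⁺ⁿ⁾; in particular, for every n ∈ ℤ there exist finitely many homogeneous elements a₁,…,a_k of total degree −n and b₁,…,b_k of total degree n with Σᵢ aᵢ bᵢ = 1. (This expresses that O(S³) with the O(U(1))-coaction determined by the ℤ-grading is a principal comodule algebra, i.e., the classical Hopf fibration S³ → S² is a Hopf–Galois extension admitting a strong connection.) -/
/-!
Write `T n = totalDeg 𝒜 n`. Always `T m * T n ≤ T (m + n)`. The set of `n` with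
`1 ∈ T (-n) * T n` is closed under addition, because `1 = 1 * 1` lies in
`T (-m) * T m * (T (-n) * T n) ≤ T (-(m + n)) * T (m + n)`
(`one_mem_totalDeg_mul_add`). The sphere relation `z₁* z₁ + z₂* z₂ = 1` puts both `1` and `-1` in
this set, so it is all of `ℤ` (`one_mem_totalDeg_mul`). Strong grading follows from
`T (m + n) = T (m + n) * 1 ≤ T (m + n) * T (-n) * T n ≤ T m * T n`.
-/

open scoped TensorProduct
noncomputable section

lemma le_totalDeg {A : Type} [AddCommMonoid A] [Module ℂ A]
    (𝒜 : ℤ × ℤ → Submodule ℂ A) {n : ℤ} (p : ℤ × ℤ) (hp : p.1 + p.2 = n) :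
    𝒜 p ≤ totalDeg 𝒜 n :=
  le_iSup₂ (f := fun (p : ℤ × ℤ) (_ : p.1 + p.2 = n) => 𝒜 p) p hp

section

variable {A : Type} [CommRing A] [Algebra ℂ A] (𝒜 : ℤ × ℤ → Submodule ℂ A) [GradedAlgebra 𝒜]

lemma totalDeg_mul_le {m n k : ℤ} (h : m + n = k) :
    totalDeg 𝒜 m * totalDeg 𝒜 n ≤ totalDeg 𝒜 k := by
  subst h
  conv_lhs => unfold totalDeg
  simp only [Submodule.iSup_mul, Submodule.mul_iSup, iSup_le_iff]
  intro q hq p hp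
  refine le_trans ?_ (le_totalDeg 𝒜 (p + q) ?_)
  · rw [Submodule.mul_le]
    intro a ha b hb
    exact SetLike.GradedMul.mul_mem ha hb
  · simp only [Prod.fst_add, Prod.snd_add]
    omega

lemma one_mem_totalDeg_mul_add {m n : ℤ}
    (hm : (1 : A) ∈ totalDeg 𝒜 (-m) * totalDeg 𝒜 m)
    (hn : (1 : A) ∈ totalDeg 𝒜 (-n) * totalDeg 𝒜 n) :
    (1 : A) ∈ totalDeg 𝒜 (-(m + n)) * totalDeg 𝒜 (m + n) := by
  have h := Submodule.mul_mem_mul hm hn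
  rw [mul_one, mul_mul_mul_comm] at h
  exact mul_le_mul' (totalDeg_mul_le 𝒜 (by ring)) (totalDeg_mul_le 𝒜 rfl) h

lemma one_mem_totalDeg_mul {z1 z2 z1s z2s : A}
    (hz1 : z1 ∈ 𝒜 (1, 0)) (hz2 : z2 ∈ 𝒜 (0, 1))
    (hz1s : z1s ∈ 𝒜 (-1, 0)) (hz2s : z2s ∈ 𝒜 (0, -1))
    (hrel : z1s * z1 + z2s * z2 = 1) (n : ℤ) :
    (1 : A) ∈ totalDeg 𝒜 (-n) * totalDeg 𝒜 n := by
  have h1 : (1 : A) ∈ totalDeg 𝒜 (-1) * totalDeg 𝒜 1 := by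
    rw [← hrel]
    exact add_mem
      (Submodule.mul_mem_mul (le_totalDeg 𝒜 (-1, 0) (by simp) hz1s)
        (le_totalDeg 𝒜 (1, 0) (by simp) hz1))
      (Submodule.mul_mem_mul (le_totalDeg 𝒜 (0, -1) (by simp) hz2s)
        (le_totalDeg 𝒜 (0, 1) (by simp) hz2))
  have h1' : (1 : A) ∈ totalDeg 𝒜 (-(-1)) * totalDeg 𝒜 (-1) := by
    rwa [neg_neg, mul_comm]
  induction n with
  | zero =>
    have h0 : (1 : A) ∈ totalDeg 𝒜 0 :=
      le_totalDeg 𝒜 0 (by simp) (SetLike.GradedOne.one_mem (A := 𝒜))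
    simpa using Submodule.mul_mem_mul h0 h0
  | succ i ih => exact one_mem_totalDeg_mul_add 𝒜 ih h1
  | pred i ih => exact one_mem_totalDeg_mul_add 𝒜 ih h1'

end

lemma exists_fin_sum_of_mem_mul {A : Type} [CommRing A] [Algebra ℂ A]
    (M N : Submodule ℂ A) {x : A} (hx : x ∈ M * N) :
    ∃ (k : ℕ) (a b : Fin k → A), (∀ i, a i ∈ M) ∧ (∀ i, b i ∈ N) ∧ ∑ i, a i * b i = x := by
  refine Submodule.mul_induction_on hx ?_ ?_
  · intro m hm n hn
    exact ⟨1, fun _ => m, fun _ => n, fun _ => hm, fun _ => hn, by simp⟩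
  · rintro x y ⟨k, a, b, ha, hb, rfl⟩ ⟨l, c, d, hc, hd, rfl⟩
    refine ⟨k + l, Fin.append a c, Fin.append b d, ?_, ?_, ?_⟩
    · intro i
      refine Fin.addCases (fun j => ?_) (fun j => ?_) i <;> simp [ha, hc]
    · intro i
      refine Fin.addCases (fun j => ?_) (fun j => ?_) i <;> simp [hb, hd]
    · simp [Fin.sum_univ_add]

/-- `A = O(S³)`, graded by total degree, is strongly `ℤ`-graded:
for all `m, n ∈ ℤ` the `ℂ`-span of `{a b : a ∈ A⁽ᵐ⁾, b ∈ A⁽ⁿ⁾}` equals `A⁽ᵐ⁺ⁿ⁾`;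
in particular for every `n` there are finitely many homogeneous `a₁,…,a_k` of total
degree `−n` and `b₁,…,b_k` of total degree `n` with `Σᵢ aᵢ bᵢ = 1`. -/
theorem classical_hopf_fibration_strongly_graded
    (A : Type) [CommRing A] [Algebra ℂ A]
    (𝒜 : ℤ × ℤ → Submodule ℂ A) [GradedAlgebra 𝒜]
    (z1 z2 z1s z2s : A)
    (hz1 : z1 ∈ 𝒜 (1, 0)) (hz2 : z2 ∈ 𝒜 (0, 1))
    (hz1s : z1s ∈ 𝒜 (-1, 0)) (hz2s : z2s ∈ 𝒜 (0, -1))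
    (hrel : z1s * z1 + z2s * z2 = 1)
    (huniv : ∀ (C : Type) [CommRing C] [Algebra ℂ C] (w1 w2 w1s w2s : C),
      w1s * w1 + w2s * w2 = 1 →
      ∃! f : A →ₐ[ℂ] C, f z1 = w1 ∧ f z2 = w2 ∧ f z1s = w1s ∧ f z2s = w2s) :
    (∀ m n : ℤ,
      Submodule.span ℂ
          {x : A | ∃ a ∈ totalDeg 𝒜 m, ∃ b ∈ totalDeg 𝒜 n, x = a * b}
        = totalDeg 𝒜 (m + n)) ∧
    (∀ n : ℤ, ∃ (k : ℕ) (a b : Fin k → A),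
      (∀ i, a i ∈ totalDeg 𝒜 (-n)) ∧ (∀ i, b i ∈ totalDeg 𝒜 n) ∧
      ∑ i, a i * b i = 1) := by
  have hone := one_mem_totalDeg_mul 𝒜 hz1 hz2 hz1s hz2s hrel
  refine ⟨fun m n => ?_, fun n => exists_fin_sum_of_mem_mul _ _ (hone n)⟩
  have hspan : Submodule.span ℂ {x : A | ∃ a ∈ totalDeg 𝒜 m, ∃ b ∈ totalDeg 𝒜 n, x = a * b}
      = totalDeg 𝒜 m * totalDeg 𝒜 n := by
    refine le_antisymm (Submodule.span_le.2 ?_) (Submodule.mul_le.2 fun a ha b hb => ?_)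
    · rintro _ ⟨a, ha, b, hb, rfl⟩
      exact Submodule.mul_mem_mul ha hb
    · exact Submodule.subset_span ⟨a, ha, b, hb, rfl⟩
  rw [hspan]
  refine le_antisymm (totalDeg_mul_le 𝒜 rfl) fun x hx => ?_
  have h := Submodule.mul_mem_mul hx (hone n)
  rw [mul_one, ← mul_assoc] at h
  exact mul_le_mul' (totalDeg_mul_le 𝒜 (by ring)) le_rfl h
end
end

section
/- For every θ ∈ ℝ, the algebra A_θ = (O(S³), ⋆_θ), graded by total degree, is strongly ℤ-graded: for every m, n ∈ ℤ the ℂ-span of the products {a ⋆_θ b : a of total degree m, b of total degree n} equals the total-degree-(m+n) component; in particular, for every n ∈ ℤ there exist finitely many homogeneous elements a₁,…,a_k of total degree −n and b₁,…,b_k of total degree n with Σᵢ aᵢ ⋆_θ bᵢ = 1. (This expresses that the deformed Hopf fibration (A_θ, δ) is a principal O(U(1))-comodule algebra.) -/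
/-!
Expanding `1 = (z₁* z₁ + z₂* z₂)^N` by the binomial theorem writes `1` as a finite sum of
undeformed products `aᵢ bᵢ` with `bᵢ` bihomogeneous of some degree `pᵢ` of total degree `n` and
`aᵢ` bihomogeneous of the opposite degree `-pᵢ` (`exists_partition_of_one`; for `n < 0` the two
factors are exchanged).

The antisymmetric pairing in the phase vanishes on `(-p, p)`, so `aᵢ ⋆ bᵢ = aᵢ bᵢ` and the same
elements give a partition of `1` for `⋆_θ`. Every bihomogeneous `c` of total degree `m + n` is
`∑ (c aᵢ) bᵢ`, and each summand is a nonzero scalar multiple of `(c aᵢ) ⋆ bᵢ` with `c aᵢ` of total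
degree `m`; this gives the strong grading. Conversely `⋆_θ` respects the total degree because it
rescales the product on bihomogeneous elements.
-/

open scoped TensorProduct
noncomputable section

/-- The phase factor `e^{πiθ(m₁m₂' − m₂m₁')}`. -/
def phase (θ : ℝ) (p q : ℤ × ℤ) : ℂ :=
  Complex.exp (Complex.I * ((Real.pi * θ : ℝ) : ℂ) * ((p.1 * q.2 - p.2 * q.1 : ℤ) : ℂ))

theorem phase_neg_self (θ : ℝ) (p : ℤ × ℤ) : phase θ (-p) p = 1 := by
  have h : (-p).1 * p.2 - (-p).2 * p.1 = 0 := by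
    simp only [Prod.fst_neg, Prod.snd_neg]; ring
  rw [phase, h, Int.cast_zero, mul_zero, Complex.exp_zero]

theorem mem_totalDeg {A : Type} [AddCommMonoid A] [Module ℂ A]
    {𝒜 : ℤ × ℤ → Submodule ℂ A} {p : ℤ × ℤ} {n : ℤ} (hp : p.1 + p.2 = n) {a : A}
    (ha : a ∈ 𝒜 p) : a ∈ totalDeg 𝒜 n :=
  (le_iSup₂_of_le (f := fun (q : ℤ × ℤ) (_ : q.1 + q.2 = n) => 𝒜 q) p hp le_rfl) ha

/-- The binomial expansion of `1 = (z₁* z₁ + z₂* z₂)^N`: the `i`-th term is a product of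
monomials of opposite bidegrees `∓(i, N - i)`. -/
theorem exists_partition_of_one_nat
    {A : Type} [CommRing A] [Algebra ℂ A]
    (𝒜 : ℤ × ℤ → Submodule ℂ A) [GradedAlgebra 𝒜]
    {z1 z2 z1s z2s : A}
    (hz1 : z1 ∈ 𝒜 (1, 0)) (hz2 : z2 ∈ 𝒜 (0, 1))
    (hz1s : z1s ∈ 𝒜 (-1, 0)) (hz2s : z2s ∈ 𝒜 (0, -1))
    (hrel : z1s * z1 + z2s * z2 = 1) (N : ℕ) :
    ∃ (p : Fin (N + 1) → ℤ × ℤ) (a b : Fin (N + 1) → A),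
      (∀ i, (p i).1 + (p i).2 = N) ∧ (∀ i, a i ∈ 𝒜 (-p i)) ∧ (∀ i, b i ∈ 𝒜 (p i)) ∧
      ∑ i, a i * b i = 1 := by
  refine ⟨fun i => ((i : ℕ), ((N - i : ℕ) : ℤ)),
    fun i => (N.choose i : ℂ) • (z1s ^ (i : ℕ) * z2s ^ (N - i : ℕ)),
    fun i => z1 ^ (i : ℕ) * z2 ^ (N - i : ℕ), ?_, ?_, ?_, ?_⟩
  · intro i
    have := i.is_lt
    simp only
    omega
  · intro i
    refine Submodule.smul_mem _ _ ?_
    have h := SetLike.mul_mem_graded (SetLike.pow_mem_graded (i : ℕ) hz1s)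
      (SetLike.pow_mem_graded (N - i : ℕ) hz2s)
    convert h using 2
    ext <;> simp
  · intro i
    have h := SetLike.mul_mem_graded (SetLike.pow_mem_graded (i : ℕ) hz1)
      (SetLike.pow_mem_graded (N - i : ℕ) hz2)
    convert h using 2
    ext <;> simp
  · have h : (z1s * z1 + z2s * z2) ^ N = 1 := by rw [hrel, one_pow]
    rw [add_pow, Finset.sum_range] at h
    rw [← h]
    refine Finset.sum_congr rfl fun i _ => ?_
    simp only [Algebra.smul_def, map_natCast]
    ring

/-- For every integer `n`, `1` is a finite sum of undeformed products of bihomogeneous elements of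
opposite bidegrees, the right-hand factors having total degree `n`. -/
theorem exists_partition_of_one
    {A : Type} [CommRing A] [Algebra ℂ A]
    (𝒜 : ℤ × ℤ → Submodule ℂ A) [GradedAlgebra 𝒜]
    {z1 z2 z1s z2s : A}
    (hz1 : z1 ∈ 𝒜 (1, 0)) (hz2 : z2 ∈ 𝒜 (0, 1))
    (hz1s : z1s ∈ 𝒜 (-1, 0)) (hz2s : z2s ∈ 𝒜 (0, -1))
    (hrel : z1s * z1 + z2s * z2 = 1) (n : ℤ) :
    ∃ (k : ℕ) (p : Fin k → ℤ × ℤ) (a b : Fin k → A),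
      (∀ i, (p i).1 + (p i).2 = n) ∧ (∀ i, a i ∈ 𝒜 (-p i)) ∧ (∀ i, b i ∈ 𝒜 (p i)) ∧
      ∑ i, a i * b i = 1 := by
  obtain ⟨N, rfl | rfl⟩ := n.eq_nat_or_neg
  · exact ⟨_, exists_partition_of_one_nat 𝒜 hz1 hz2 hz1s hz2s hrel N⟩
  · obtain ⟨p, a, b, hp, ha, hb, hab⟩ :=
      exists_partition_of_one_nat 𝒜 hz1 hz2 hz1s hz2s hrel N
    refine ⟨N + 1, fun i => -p i, b, a, fun i => ?_, fun i => ?_, ha, ?_⟩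
    · have := hp i
      simp only [Prod.fst_neg, Prod.snd_neg]
      omega
    · simpa using hb i
    · simpa only [mul_comm] using hab

/-- for every `θ ∈ ℝ`, the algebra `A_θ = (O(S³), ⋆_θ)`, graded by total
degree, is strongly `ℤ`-graded: for every `m, n ∈ ℤ` the `ℂ`-span of
`{a ⋆_θ b : a ∈ A⁽ᵐ⁾, b ∈ A⁽ⁿ⁾}` equals `A⁽ᵐ⁺ⁿ⁾`; in particular for every `n` there
are finitely many homogeneous `aᵢ` of total degree `−n` and `bᵢ` of total degree `n`
with `Σᵢ aᵢ ⋆_θ bᵢ = 1`. -/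
theorem deformed_hopf_fibration_strongly_graded
    (A : Type) [CommRing A] [Algebra ℂ A]
    (𝒜 : ℤ × ℤ → Submodule ℂ A) [GradedAlgebra 𝒜]
    (z1 z2 z1s z2s : A)
    (hz1 : z1 ∈ 𝒜 (1, 0)) (hz2 : z2 ∈ 𝒜 (0, 1))
    (hz1s : z1s ∈ 𝒜 (-1, 0)) (hz2s : z2s ∈ 𝒜 (0, -1))
    (hrel : z1s * z1 + z2s * z2 = 1)
    (huniv : ∀ (C : Type) [CommRing C] [Algebra ℂ C] (w1 w2 w1s w2s : C),
      w1s * w1 + w2s * w2 = 1 →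
      ∃! f : A →ₐ[ℂ] C, f z1 = w1 ∧ f z2 = w2 ∧ f z1s = w1s ∧ f z2s = w2s)
    (θ : ℝ)
    (stp : A →ₗ[ℂ] A →ₗ[ℂ] A)
    (hstp : ∀ (p q : ℤ × ℤ), ∀ a ∈ 𝒜 p, ∀ a' ∈ 𝒜 q, stp a a' = phase θ p q • (a * a')) :
    (∀ m n : ℤ,
      Submodule.span ℂ
          {x : A | ∃ a ∈ totalDeg 𝒜 m, ∃ b ∈ totalDeg 𝒜 n, x = stp a b}
        = totalDeg 𝒜 (m + n)) ∧
    (∀ n : ℤ, ∃ (k : ℕ) (a b : Fin k → A),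
      (∀ i, a i ∈ totalDeg 𝒜 (-n)) ∧ (∀ i, b i ∈ totalDeg 𝒜 n) ∧
      ∑ i, stp (a i) (b i) = 1) := by
  have hpart := exists_partition_of_one 𝒜 hz1 hz2 hz1s hz2s hrel
  refine ⟨fun m n => le_antisymm ?_ ?_, fun n => ?_⟩
  · rw [Submodule.span_le]
    rintro _ ⟨a, ha, b, hb, rfl⟩
    -- By bilinearity it suffices to treat bihomogeneous `a` and `b`.
    have hle : totalDeg 𝒜 m ≤ (totalDeg 𝒜 (m + n)).comap (stp.flip b) := by
      refine iSup₂_le fun p hp a ha => ?_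
      have hle' : totalDeg 𝒜 n ≤ (totalDeg 𝒜 (m + n)).comap (stp a) := by
        refine iSup₂_le fun q hq b hb => ?_
        rw [Submodule.mem_comap, hstp p q a ha b hb]
        refine Submodule.smul_mem _ _ (mem_totalDeg (p := p + q) ?_ (SetLike.mul_mem_graded ha hb))
        simp only [Prod.fst_add, Prod.snd_add]
        omega
      exact hle' hb
    exact hle ha
  · obtain ⟨k, p, a, b, hp, ha, hb, hab⟩ := hpart n
    refine iSup₂_le fun r hr c hc => ?_
    have hc_sum : c = ∑ i, (c * a i) * b i := by
      simp only [mul_assoc]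
      rw [← Finset.mul_sum, hab, mul_one]
    rw [hc_sum]
    refine Submodule.sum_mem _ fun i _ => ?_
    have hca : c * a i ∈ 𝒜 (r + -p i) := SetLike.mul_mem_graded hc (ha i)
    have hne : phase θ (r + -p i) (p i) ≠ 0 := Complex.exp_ne_zero _
    rw [← inv_smul_smul₀ hne (c * a i * b i), ← hstp _ _ _ hca _ (hb i)]
    refine Submodule.smul_mem _ _ (Submodule.subset_span
      ⟨_, mem_totalDeg ?_ hca, _, mem_totalDeg (hp i) (hb i), rfl⟩)
    have := hp i
    simp only [Prod.fst_add, Prod.snd_add, Prod.fst_neg, Prod.snd_neg]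
    omega
  · obtain ⟨k, p, a, b, hp, ha, hb, hab⟩ := hpart n
    refine ⟨k, a, b, fun i => mem_totalDeg ?_ (ha i), fun i => mem_totalDeg (hp i) (hb i), ?_⟩
    · have := hp i
      simp only [Prod.fst_neg, Prod.snd_neg]
      omega
    · rw [← hab]
      refine Finset.sum_congr rfl fun i _ => ?_
      rw [hstp _ _ _ (ha i) _ (hb i), phase_neg_self, one_smul]
end
end

section
/- For every ℤ-graded ℂ-vector space V, the linear map L_V : E_A(V) → E_{A_θ}(V), defined on a⊗v with a ℤ²-homogeneous of degree (m+n, −m) and v ∈ Vⁿ by L_V(a⊗v) := e^{πiθmn} a⊗v, is an isomorphism of left B-modules: L_V(b·ξ) = b·L_V(ξ) for all b ∈ B and ξ ∈ E_A(V), where the target carries the ⋆_θ-action. Moreover, L is natural in V: for every grading-preserving linear map f : V → W one has L_W ∘ (id⊗f) = (id⊗f) ∘ L_V. (Hence the associated module functors of the classical and deformed Hopf fibrations are naturally isomorphic.) -/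
/-!
On a generator `a ⊗ v` of `E_A(V)`, with `a` of degree `(m + n, -m)` and `v ∈ Vⁿ`, the map `L_V` acts
by the nonzero scalar `e^{πiθmn}`. Hence `E_A(V)` is spanned by eigenvectors of `L_V` with nonzero
eigenvalues. Each generator is then the image of a multiple of itself, which gives surjectivity.
Injectivity follows because eigenspaces are independent: the kernel (the eigenspace of `0`) meets the
sum of the other eigenspaces trivially.

Equivariance reduces to homogeneous `b ∈ B` of degree `(k, -k)`, where it is the cocycle-type identity
`e^{πiθ(k+m)n} = e^{πiθmn} e^{πiθ(k(-m) - (-k)(m+n))}` (`lphase_add_eq`). Naturality holds on generators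
because `id ⊗ f` preserves the pair `(m, n)`.
-/

open scoped TensorProduct
noncomputable section

/-- The phase factor `e^{πiθmn}`. -/
def lphase (θ : ℝ) (m n : ℤ) : ℂ :=
  Complex.exp (Complex.I * ((Real.pi * θ : ℝ) : ℂ) * ((m * n : ℤ) : ℂ))

/-- The vector space underlying the associated module `E_A(V) = ⊕ₙ A⁽ⁿ⁾ ⊗ Vⁿ`,
realized inside `A ⊗[ℂ] V` as the span of the matched homogeneous simple tensors. -/
def assocModule {A : Type} [CommRing A] [Algebra ℂ A]
    (𝒜 : ℤ × ℤ → Submodule ℂ A)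
    {V : Type} [AddCommGroup V] [Module ℂ V] (𝒱 : ℤ → Submodule ℂ V) :
    Submodule ℂ (A ⊗[ℂ] V) :=
  Submodule.span ℂ
    {x : A ⊗[ℂ] V | ∃ (m n : ℤ) (a : A) (v : V),
      a ∈ 𝒜 (m + n, -m) ∧ v ∈ 𝒱 n ∧ x = a ⊗ₜ[ℂ] v}

theorem lphase_ne_zero (θ : ℝ) (m n : ℤ) : lphase θ m n ≠ 0 :=
  Complex.exp_ne_zero _

/-- Multiplying an element of degree `(m + n, -m)` by one of degree `(k, -k)` changes the phase of
`L_V` by exactly the phase of the star product. -/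
theorem lphase_add_eq (θ : ℝ) (k m n : ℤ) :
    lphase θ (k + m) n = lphase θ m n * phase θ (k, -k) (m + n, -m) := by
  unfold lphase phase
  rw [← Complex.exp_add]
  congr 1
  push_cast
  ring

/-- for every `ℤ`-graded `ℂ`-vector space `V`, the linear map
`L_V : E_A(V) → E_{A_θ}(V)` given on `a ⊗ v` with `a` homogeneous of degree
`(m+n,−m)` and `v ∈ Vⁿ` by multiplication with `e^{πiθmn}` is an isomorphism of left
`B`-modules (target carrying the `⋆_θ`-action), and `L` is natural in `V`. -/
theorem associated_module_functors_naturally_isomorphic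
    (A : Type) [CommRing A] [Algebra ℂ A]
    (𝒜 : ℤ × ℤ → Submodule ℂ A) [GradedAlgebra 𝒜]
    (z1 z2 z1s z2s : A)
    (hz1 : z1 ∈ 𝒜 (1, 0)) (hz2 : z2 ∈ 𝒜 (0, 1))
    (hz1s : z1s ∈ 𝒜 (-1, 0)) (hz2s : z2s ∈ 𝒜 (0, -1))
    (hrel : z1s * z1 + z2s * z2 = 1)
    (huniv : ∀ (C : Type) [CommRing C] [Algebra ℂ C] (w1 w2 w1s w2s : C),
      w1s * w1 + w2s * w2 = 1 →
      ∃! f : A →ₐ[ℂ] C, f z1 = w1 ∧ f z2 = w2 ∧ f z1s = w1s ∧ f z2s = w2s)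
    (θ : ℝ)
    (stp : A →ₗ[ℂ] A →ₗ[ℂ] A)
    (hstp : ∀ (p q : ℤ × ℤ), ∀ a ∈ 𝒜 p, ∀ a' ∈ 𝒜 q, stp a a' = phase θ p q • (a * a'))
    (V : Type) [AddCommGroup V] [Module ℂ V]
    (𝒱 : ℤ → Submodule ℂ V) [DirectSum.Decomposition 𝒱]
    (L : A ⊗[ℂ] V →ₗ[ℂ] A ⊗[ℂ] V)
    (hL : ∀ (m n : ℤ) (a : A) (v : V), a ∈ 𝒜 (m + n, -m) → v ∈ 𝒱 n →
      L (a ⊗ₜ[ℂ] v) = lphase θ m n • (a ⊗ₜ[ℂ] v)) :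
    -- `L_V` is a bijection of the underlying space `E_A(V) = E_{A_θ}(V)` onto itself
    Set.BijOn L (assocModule 𝒜 𝒱) (assocModule 𝒜 𝒱) ∧
    -- `L_V` intertwines the classical and the deformed left `B`-actions
    (∀ b ∈ totalDeg 𝒜 0, ∀ ξ ∈ assocModule 𝒜 𝒱,
      L (TensorProduct.map (LinearMap.mulLeft ℂ b) LinearMap.id ξ)
        = TensorProduct.map (stp b) LinearMap.id (L ξ)) ∧
    -- naturality of `L` in `V`
    (∀ (W : Type) [AddCommGroup W] [Module ℂ W]
      (𝒲 : ℤ → Submodule ℂ W) [DirectSum.Decomposition 𝒲]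
      (f : V →ₗ[ℂ] W), (∀ n : ℤ, ∀ v ∈ 𝒱 n, f v ∈ 𝒲 n) →
      ∀ (L' : A ⊗[ℂ] W →ₗ[ℂ] A ⊗[ℂ] W),
        (∀ (m n : ℤ) (a : A) (w : W), a ∈ 𝒜 (m + n, -m) → w ∈ 𝒲 n →
          L' (a ⊗ₜ[ℂ] w) = lphase θ m n • (a ⊗ₜ[ℂ] w)) →
        ∀ ξ ∈ assocModule 𝒜 𝒱,
          L' (TensorProduct.map LinearMap.id f ξ)
            = TensorProduct.map LinearMap.id f (L ξ)) := by
  refine ⟨⟨?_, ?_, ?_⟩, ?_, ?_⟩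
  · intro ξ hξ
    have hle : assocModule 𝒜 𝒱 ≤ (assocModule 𝒜 𝒱).comap L := by
      refine Submodule.span_le.2 ?_
      rintro _ ⟨m, n, a, v, ha, hv, rfl⟩
      change L (a ⊗ₜ[ℂ] v) ∈ assocModule 𝒜 𝒱
      rw [hL m n a v ha hv]
      exact Submodule.smul_mem _ _ (Submodule.subset_span ⟨m, n, a, v, ha, hv, rfl⟩)
    exact hle hξ
  · have hle : assocModule 𝒜 𝒱 ≤ ⨆ (μ : ℂ) (_ : μ ≠ 0), Module.End.eigenspace L μ := by
      refine Submodule.span_le.2 ?_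
      rintro _ ⟨m, n, a, v, ha, hv, rfl⟩
      exact Submodule.mem_iSup_of_mem (lphase θ m n) (Submodule.mem_iSup_of_mem
        (lphase_ne_zero θ m n) (Module.End.mem_eigenspace_iff.2 (hL m n a v ha hv)))
    intro x hx y hy hxy
    have h0 : x - y ∈ Module.End.eigenspace L 0 := by
      rw [Module.End.mem_eigenspace_iff, map_sub, hxy, sub_self, zero_smul]
    exact sub_eq_zero.1 (Submodule.disjoint_def.1
      ((Module.End.eigenspaces_iSupIndep L) 0) _ h0 (hle (Submodule.sub_mem _ hx hy)))
  · intro ξ hξ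
    have hle : assocModule 𝒜 𝒱 ≤ (assocModule 𝒜 𝒱).map L := by
      refine Submodule.span_le.2 ?_
      rintro _ ⟨m, n, a, v, ha, hv, rfl⟩
      refine ⟨(lphase θ m n)⁻¹ • (a ⊗ₜ[ℂ] v),
        Submodule.smul_mem _ _ (Submodule.subset_span ⟨m, n, a, v, ha, hv, rfl⟩), ?_⟩
      rw [map_smul, hL m n a v ha hv, inv_smul_smul₀ (lphase_ne_zero θ m n)]
    exact hle hξ
  · intro b hb ξ hξ
    have hle : assocModule 𝒜 𝒱 ≤ LinearMap.eqLocus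
        (L ∘ₗ TensorProduct.map (LinearMap.mulLeft ℂ b) LinearMap.id)
        (TensorProduct.map (stp b) LinearMap.id ∘ₗ L) := by
      refine Submodule.span_le.2 ?_
      rintro _ ⟨m, n, a, v, ha, hv, rfl⟩
      -- For a fixed generator `a ⊗ v`, both sides are linear in `b`, so `b` may be taken homogeneous.
      have hB : totalDeg 𝒜 0 ≤ LinearMap.eqLocus
          (L ∘ₗ (TensorProduct.mk ℂ A V).flip v ∘ₗ LinearMap.mulRight ℂ a)
          (lphase θ m n • ((TensorProduct.mk ℂ A V).flip v ∘ₗ stp.flip a)) := by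
        refine iSup₂_le ?_
        rintro ⟨k, l⟩ hkl c hc
        obtain rfl : l = -k := by
          change k + l = 0 at hkl
          omega
        have hca : c * a ∈ 𝒜 ((k + m) + n, -(k + m)) := by
          have h := SetLike.mul_mem_graded hc ha
          convert h using 2
          ext <;> simp <;> ring
        change L ((c * a) ⊗ₜ[ℂ] v) = lphase θ m n • (stp c a ⊗ₜ[ℂ] v)
        rw [hL _ n _ v hca hv, hstp _ _ c hc a ha, ← TensorProduct.smul_tmul', smul_smul,
          lphase_add_eq]
      have h := hB hb
      change L ((b * a) ⊗ₜ[ℂ] v) = lphase θ m n • (stp b a ⊗ₜ[ℂ] v) at h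
      change L ((b * a) ⊗ₜ[ℂ] v) = TensorProduct.map (stp b) LinearMap.id (L (a ⊗ₜ[ℂ] v))
      rw [h, hL m n a v ha hv, map_smul, TensorProduct.map_tmul, LinearMap.id_apply]
    exact hle hξ
  · intro W _ _ 𝒲 _ f hf L' hL' ξ hξ
    have hle : assocModule 𝒜 𝒱 ≤ LinearMap.eqLocus
        (L' ∘ₗ TensorProduct.map LinearMap.id f)
        (TensorProduct.map LinearMap.id f ∘ₗ L) := by
      refine Submodule.span_le.2 ?_
      rintro _ ⟨m, n, a, v, ha, hv, rfl⟩
      change L' (a ⊗ₜ[ℂ] f v) = TensorProduct.map LinearMap.id f (L (a ⊗ₜ[ℂ] v))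
      rw [hL m n a v ha hv, hL' m n a _ ha (hf n v hv), map_smul, TensorProduct.map_tmul,
        LinearMap.id_apply]
    exact hle hξ
end
end

section
/- The map φ_θ is bijective and satisfies μ_{A_θ} = μ_A ∘ φ_θ; consequently it restricts to a linear bijection Γ¹(A_θ) → Γ¹(A). This restriction satisfies ver ∘ φ_θ = ver_θ, where ver(a⊗a') := Σₙ (a · a'⁽ⁿ⁾) ⊗ tⁿ ∈ A ⊗ ℂ[t,t⁻¹] and ver_θ(a⊗a') := Σₙ (a ⋆_θ a'⁽ⁿ⁾) ⊗ tⁿ (a'⁽ⁿ⁾ being the total-degree-n component of a'), and φ_θ maps the A_θ-sub-bimodule of Γ¹(A_θ) generated by Γ¹(B) := ker(μ_B : B⊗B → B) (with bimodule actions a·(x⊗y)·a' := (a ⋆_θ x)⊗(y ⋆_θ a')) bijectively onto the A-sub-bimodule of Γ¹(A) generated by Γ¹(B) (with the undeformed actions). Hence the universal Atiyah sequences of the classical and deformed Hopf fibrations are isomorphic. -/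
/-!
Every map involved is determined by its values on tensors of `ℤ²`-homogeneous elements, so the
first four claims reduce to identities of phases; the inverse of `φ_θ` is `φ_{-θ}`.

For the sub-bimodules, let `σ_u` be the automorphism of `A` acting on `𝒜 r` by `phase θ u r`.
If `a ∈ 𝒜 p`, `a' ∈ 𝒜 q` and `g ∈ B ⊗ B`, then
`φ (a ⋆ g ⋆ a') = phase θ p q • a · (σ_{p-q} ⊗ σ_{p-q}) g · a'`, because the phase of two degrees
on the antidiagonal is `1` (`phi_act`). As `σ_u ⊗ σ_u` preserves `Γ¹(B)` and has inverse
`σ_{-u} ⊗ σ_{-u}`, the generators with homogeneous `a`, `a'` of the two sub-bimodules correspond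
under `φ` up to nonzero scalars.
-/

open scoped TensorProduct
noncomputable section

/-- `Γ¹(B) = ker(μ_B : B ⊗ B → B)`, realized inside `A ⊗ A` as the intersection of the
span of the simple tensors with both factors of total degree `0` with `ker μ_A`. -/
def Gamma1B {A : Type} [CommRing A] [Algebra ℂ A]
    (𝒜 : ℤ × ℤ → Submodule ℂ A) : Submodule ℂ (A ⊗[ℂ] A) :=
  Submodule.span ℂ
      {y : A ⊗[ℂ] A | ∃ b ∈ totalDeg 𝒜 0, ∃ b' ∈ totalDeg 𝒜 0, y = b ⊗ₜ[ℂ] b'} ⊓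
    LinearMap.ker (LinearMap.mul' ℂ A)

section Phase

lemma phase_ne_zero (θ : ℝ) (p q : ℤ × ℤ) : phase θ p q ≠ 0 := Complex.exp_ne_zero _

lemma phase_neg_mul (θ : ℝ) (p q : ℤ × ℤ) : phase (-θ) p q * phase θ p q = 1 := by
  rw [phase, phase, ← Complex.exp_add, ← Complex.exp_zero]
  congr 1
  push_cast
  ring

lemma phase_neg_left_mul (θ : ℝ) (u r : ℤ × ℤ) : phase θ (-u) r * phase θ u r = 1 := by
  rw [phase, phase, ← Complex.exp_add, ← Complex.exp_zero]
  congr 1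
  simp only [Prod.fst_neg, Prod.snd_neg]
  push_cast
  ring

lemma phase_add_right (θ : ℝ) (u r s : ℤ × ℤ) :
    phase θ u (r + s) = phase θ u r * phase θ u s := by
  rw [phase, phase, phase, ← Complex.exp_add]
  congr 1
  simp only [Prod.fst_add, Prod.snd_add]
  push_cast
  ring

/-- The total phase of `φ ((a ⋆ x) ⊗ (y ⋆ a'))` when `x` and `y` have total degree `0`. -/
lemma phase_act (θ : ℝ) (p q r s : ℤ × ℤ) (hr : r.1 + r.2 = 0) (hs : s.1 + s.2 = 0) :
    phase θ p r * phase θ s q * phase θ (p + r) (s + q)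
      = phase θ p q * (phase θ (p - q) r * phase θ (p - q) s) := by
  obtain ⟨r1, r2⟩ := r
  obtain ⟨s1, s2⟩ := s
  obtain rfl : r2 = -r1 := by simp at hr; omega
  obtain rfl : s2 = -s1 := by simp at hs; omega
  simp only [phase, ← Complex.exp_add]
  congr 1
  simp only [Prod.fst_add, Prod.snd_add, Prod.fst_sub, Prod.snd_sub]
  push_cast
  ring

end Phase

section Graded

variable {A : Type} [CommRing A] [Algebra ℂ A] (𝒜 : ℤ × ℤ → Submodule ℂ A)
  {M : Type} [AddCommGroup M] [Module ℂ M]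

/-- Linear maps agreeing on tensors of homogeneous elements of total degree `0` agree on
`Γ¹(B)`. -/
lemma eq_on_Gamma1B {f g : A ⊗[ℂ] A →ₗ[ℂ] M}
    (h : ∀ r s : ℤ × ℤ, r.1 + r.2 = 0 → s.1 + s.2 = 0 →
      ∀ a ∈ 𝒜 r, ∀ b ∈ 𝒜 s, f (a ⊗ₜ b) = g (a ⊗ₜ b))
    {x : A ⊗[ℂ] A} (hx : x ∈ Gamma1B 𝒜) : f x = g x := by
  refine (Submodule.span_le (p := LinearMap.eqLocus f g)).2 ?_ hx.1
  rintro _ ⟨b, hb, b', hb', rfl⟩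
  have h1 : ∀ r : ℤ × ℤ, r.1 + r.2 = 0 → ∀ a ∈ 𝒜 r, f (a ⊗ₜ b') = g (a ⊗ₜ b') := by
    intro r hr a ha
    have : totalDeg 𝒜 0 ≤ LinearMap.eqLocus (f.comp (TensorProduct.mk ℂ A A a))
        (g.comp (TensorProduct.mk ℂ A A a)) :=
      iSup₂_le fun s hs c hc => by simpa using h r s hr hs a ha c hc
    simpa using this hb'
  have : totalDeg 𝒜 0 ≤ LinearMap.eqLocus (f.comp ((TensorProduct.mk ℂ A A).flip b'))
      (g.comp ((TensorProduct.mk ℂ A A).flip b')) :=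
    iSup₂_le fun r hr a ha => by simpa using h1 r hr a ha
  simpa using this hb

variable [GradedAlgebra 𝒜]

lemma hom_ext {f g : A →ₗ[ℂ] M} (h : ∀ r, ∀ a ∈ 𝒜 r, f a = g a) : f = g := by
  ext a
  induction a using DirectSum.Decomposition.inductionOn 𝒜 with
  | zero => simp
  | homogeneous a => exact h _ _ a.2
  | add a b ha hb => simp [ha, hb]

lemma tensor_hom_ext {f g : A ⊗[ℂ] A →ₗ[ℂ] M}
    (h : ∀ r s, ∀ a ∈ 𝒜 r, ∀ b ∈ 𝒜 s, f (a ⊗ₜ b) = g (a ⊗ₜ b)) : f = g := by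
  apply TensorProduct.ext
  refine hom_ext 𝒜 fun r a ha => hom_ext 𝒜 fun s b hb => ?_
  simpa using h r s a ha b hb

/-- The linear map on `A` glued from linear maps on the homogeneous components. -/
def glue (F : ℤ × ℤ → A →ₗ[ℂ] M) : A →ₗ[ℂ] M :=
  (DirectSum.toModule ℂ (ℤ × ℤ) M fun r => (F r).comp (𝒜 r).subtype).comp
    (DirectSum.decomposeLinearEquiv 𝒜).toLinearMap

lemma glue_apply (F : ℤ × ℤ → A →ₗ[ℂ] M) {r : ℤ × ℤ} {a : A} (ha : a ∈ 𝒜 r) :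
    glue 𝒜 F a = F r a := by
  lift a to 𝒜 r using ha
  simp [glue, DirectSum.toModule_lof]

/-- The automorphism `σ_u` of `A` acting on `𝒜 r` as multiplication by `phase θ u r`. -/
def sig (θ : ℝ) (u : ℤ × ℤ) : A →ₗ[ℂ] A :=
  glue 𝒜 fun r => phase θ u r • LinearMap.id

lemma sig_apply (θ : ℝ) (u : ℤ × ℤ) {r : ℤ × ℤ} {a : A} (ha : a ∈ 𝒜 r) :
    sig 𝒜 θ u a = phase θ u r • a := by
  simp [sig, glue_apply 𝒜 _ ha]

/-- The map multiplying `𝒜 p ⊗ 𝒜 q` by `phase θ p q`. -/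
def phi (θ : ℝ) : A ⊗[ℂ] A →ₗ[ℂ] A ⊗[ℂ] A :=
  TensorProduct.lift (glue 𝒜 fun p => (TensorProduct.mk ℂ A A).compl₂ (sig 𝒜 θ p))

lemma phi_apply (θ : ℝ) {p q : ℤ × ℤ} {a b : A} (ha : a ∈ 𝒜 p) (hb : b ∈ 𝒜 q) :
    phi 𝒜 θ (a ⊗ₜ b) = phase θ p q • (a ⊗ₜ[ℂ] b) := by
  simp [phi, glue_apply 𝒜 _ ha, sig_apply 𝒜 _ _ hb]

lemma sig_mem_totalDeg (θ : ℝ) (u : ℤ × ℤ) {n : ℤ} {b : A} (hb : b ∈ totalDeg 𝒜 n) :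
    sig 𝒜 θ u b ∈ totalDeg 𝒜 n := by
  suffices h : totalDeg 𝒜 n ≤ (totalDeg 𝒜 n).comap (sig 𝒜 θ u) from h hb
  refine iSup₂_le fun r hr a ha => ?_
  rw [Submodule.mem_comap, sig_apply 𝒜 θ u ha]
  exact Submodule.smul_mem _ _ (le_iSup₂ (f := fun (p : ℤ × ℤ) (_ : p.1 + p.2 = n) => 𝒜 p) r hr ha)

lemma map_sig_mem (θ : ℝ) (u : ℤ × ℤ) {g : A ⊗[ℂ] A} (hg : g ∈ Gamma1B 𝒜) :
    TensorProduct.map (sig 𝒜 θ u) (sig 𝒜 θ u) g ∈ Gamma1B 𝒜 := by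
  refine ⟨?_, ?_⟩
  · refine (Submodule.span_le (p := (Submodule.span ℂ _).comap
      (TensorProduct.map (sig 𝒜 θ u) (sig 𝒜 θ u)))).2 ?_ hg.1
    rintro _ ⟨b, hb, b', hb', rfl⟩
    exact Submodule.subset_span
      ⟨_, sig_mem_totalDeg 𝒜 θ u hb, _, sig_mem_totalDeg 𝒜 θ u hb', by simp⟩
  · -- `σ_u` is multiplicative since the phase is additive in its second argument.
    have h : (LinearMap.mul' ℂ A).comp (TensorProduct.map (sig 𝒜 θ u) (sig 𝒜 θ u))
        = (sig 𝒜 θ u).comp (LinearMap.mul' ℂ A) := by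
      refine tensor_hom_ext 𝒜 fun r s a ha b hb => ?_
      simp [sig_apply 𝒜 θ u ha, sig_apply 𝒜 θ u hb, sig_apply 𝒜 θ u (SetLike.mul_mem_graded ha hb),
        phase_add_right, smul_smul, mul_comm]
    have h0 : LinearMap.mul' ℂ A g = 0 := hg.2
    have h1 := LinearMap.congr_fun h g
    simp only [LinearMap.comp_apply, h0, map_zero] at h1
    exact h1

lemma map_sig_neg (θ : ℝ) (u : ℤ × ℤ) (g : A ⊗[ℂ] A) :
    TensorProduct.map (sig 𝒜 θ u) (sig 𝒜 θ u)
      (TensorProduct.map (sig 𝒜 θ (-u)) (sig 𝒜 θ (-u)) g) = g := by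
  have h : (sig 𝒜 θ u).comp (sig 𝒜 θ (-u)) = LinearMap.id := by
    refine hom_ext 𝒜 fun r a ha => ?_
    simp [sig_apply 𝒜 θ _ ha, smul_smul, phase_neg_left_mul]
  rw [← LinearMap.comp_apply, ← TensorProduct.map_comp, h, TensorProduct.map_id, LinearMap.id_apply]

/-- `φ (a ⋆ g ⋆ a') = phase θ p q • a · (σ_{p-q} ⊗ σ_{p-q}) g · a'` for `g ∈ Γ¹(B)`. -/
lemma phi_act {θ : ℝ} {stp : A →ₗ[ℂ] A →ₗ[ℂ] A}
    (hstp : ∀ (p q : ℤ × ℤ), ∀ a ∈ 𝒜 p, ∀ a' ∈ 𝒜 q, stp a a' = phase θ p q • (a * a'))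
    {φ : A ⊗[ℂ] A →ₗ[ℂ] A ⊗[ℂ] A}
    (hφ : ∀ (p q : ℤ × ℤ), ∀ a ∈ 𝒜 p, ∀ a' ∈ 𝒜 q,
      φ (a ⊗ₜ[ℂ] a') = phase θ p q • (a ⊗ₜ[ℂ] a'))
    {p q : ℤ × ℤ} {a a' : A} (ha : a ∈ 𝒜 p) (ha' : a' ∈ 𝒜 q)
    {g : A ⊗[ℂ] A} (hg : g ∈ Gamma1B 𝒜) :
    φ (TensorProduct.map (stp a) (stp.flip a') g) =
      phase θ p q • TensorProduct.map (LinearMap.mulLeft ℂ a) (LinearMap.mulRight ℂ a')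
        (TensorProduct.map (sig 𝒜 θ (p - q)) (sig 𝒜 θ (p - q)) g) := by
  refine eq_on_Gamma1B 𝒜 (f := φ.comp (TensorProduct.map (stp a) (stp.flip a')))
    (g := phase θ p q • (TensorProduct.map (LinearMap.mulLeft ℂ a) (LinearMap.mulRight ℂ a')).comp
      (TensorProduct.map (sig 𝒜 θ (p - q)) (sig 𝒜 θ (p - q)))) ?_ hg
  intro r s hr hs x hx y hy
  have key := phase_act θ p q r s hr hs
  simp only [LinearMap.comp_apply, LinearMap.smul_apply, TensorProduct.map_tmul,
    LinearMap.flip_apply, hstp p r a ha x hx, hstp s q y hy a' ha', sig_apply 𝒜 θ _ hx,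
    sig_apply 𝒜 θ _ hy, LinearMap.mulLeft_apply, LinearMap.mulRight_apply, TensorProduct.smul_tmul_smul, map_smul,
    hφ _ _ _ (SetLike.mul_mem_graded ha hx) _ (SetLike.mul_mem_graded hy ha'), smul_smul, key]

end Graded

/-- `φ_θ` is bijective and satisfies `μ_{A_θ} = μ_A ∘ φ_θ`; consequently it
restricts to a linear bijection `Γ¹(A_θ) → Γ¹(A)`; this restriction satisfies
`ver ∘ φ_θ = ver_θ` (with values in `A ⊗ ℂ[t,t⁻¹]`), and `φ_θ` maps the
`A_θ`-sub-bimodule of `Γ¹(A_θ)` generated by `Γ¹(B)` bijectively onto the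
`A`-sub-bimodule of `Γ¹(A)` generated by `Γ¹(B)`. Hence the universal Atiyah sequences
of the classical and deformed Hopf fibrations are isomorphic. -/
theorem universal_atiyah_sequences_isomorphic
    (A : Type) [CommRing A] [Algebra ℂ A]
    (𝒜 : ℤ × ℤ → Submodule ℂ A) [GradedAlgebra 𝒜]
    (z1 z2 z1s z2s : A)
    (hz1 : z1 ∈ 𝒜 (1, 0)) (hz2 : z2 ∈ 𝒜 (0, 1))
    (hz1s : z1s ∈ 𝒜 (-1, 0)) (hz2s : z2s ∈ 𝒜 (0, -1))
    (hrel : z1s * z1 + z2s * z2 = 1)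
    (huniv : ∀ (C : Type) [CommRing C] [Algebra ℂ C] (w1 w2 w1s w2s : C),
      w1s * w1 + w2s * w2 = 1 →
      ∃! f : A →ₐ[ℂ] C, f z1 = w1 ∧ f z2 = w2 ∧ f z1s = w1s ∧ f z2s = w2s)
    (θ : ℝ)
    (stp : A →ₗ[ℂ] A →ₗ[ℂ] A)
    (hstp : ∀ (p q : ℤ × ℤ), ∀ a ∈ 𝒜 p, ∀ a' ∈ 𝒜 q, stp a a' = phase θ p q • (a * a'))
    -- the cocycle phase map `φ_θ` on `A ⊗ A`
    (φ : A ⊗[ℂ] A →ₗ[ℂ] A ⊗[ℂ] A)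
    (hφ : ∀ (p q : ℤ × ℤ), ∀ a ∈ 𝒜 p, ∀ a' ∈ 𝒜 q,
      φ (a ⊗ₜ[ℂ] a') = phase θ p q • (a ⊗ₜ[ℂ] a'))
    -- the universal vertical lifts, with values in `A ⊗ ℂ[t,t⁻¹]`
    (ver verθ : A ⊗[ℂ] A →ₗ[ℂ] A ⊗[ℂ] LaurentPolynomial ℂ)
    (hver : ∀ (p q : ℤ × ℤ), ∀ a ∈ 𝒜 p, ∀ a' ∈ 𝒜 q,
      ver (a ⊗ₜ[ℂ] a') = (a * a') ⊗ₜ[ℂ] LaurentPolynomial.T (q.1 + q.2))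
    (hverθ : ∀ (p q : ℤ × ℤ), ∀ a ∈ 𝒜 p, ∀ a' ∈ 𝒜 q,
      verθ (a ⊗ₜ[ℂ] a') = (stp a a') ⊗ₜ[ℂ] LaurentPolynomial.T (q.1 + q.2)) :
    -- `φ_θ` is bijective
    Function.Bijective φ ∧
    -- `μ_{A_θ} = μ_A ∘ φ_θ`
    TensorProduct.lift stp = (LinearMap.mul' ℂ A).comp φ ∧
    -- `φ_θ` maps `Γ¹(A_θ)` bijectively onto `Γ¹(A)`
    Submodule.map φ (LinearMap.ker (TensorProduct.lift stp))
      = LinearMap.ker (LinearMap.mul' ℂ A) ∧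
    -- `ver ∘ φ_θ = ver_θ`
    ver.comp φ = verθ ∧
    -- `φ_θ` maps the deformed sub-bimodule generated by `Γ¹(B)` onto the classical one
    Submodule.map φ
        (Submodule.span ℂ {y : A ⊗[ℂ] A | ∃ (a a' : A), ∃ g ∈ Gamma1B 𝒜,
          y = TensorProduct.map (stp a) (stp.flip a') g})
      = Submodule.span ℂ {y : A ⊗[ℂ] A | ∃ (a a' : A), ∃ g ∈ Gamma1B 𝒜,
          y = TensorProduct.map (LinearMap.mulLeft ℂ a) (LinearMap.mulRight ℂ a') g} := by
  classical
  have hμ : TensorProduct.lift stp = (LinearMap.mul' ℂ A).comp φ :=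
    tensor_hom_ext 𝒜 fun p q a ha b hb => by simp [hstp p q a ha b hb, hφ p q a ha b hb]
  have hl : (phi 𝒜 (-θ)).comp φ = LinearMap.id :=
    tensor_hom_ext 𝒜 fun p q a ha b hb => by
      simp [hφ p q a ha b hb, phi_apply 𝒜 _ ha hb, smul_smul, mul_comm (phase θ p q),
        phase_neg_mul]
  have hr : φ.comp (phi 𝒜 (-θ)) = LinearMap.id :=
    tensor_hom_ext 𝒜 fun p q a ha b hb => by
      simp [hφ p q a ha b hb, phi_apply 𝒜 _ ha hb, smul_smul, phase_neg_mul]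
  have hbij : Function.Bijective φ :=
    ⟨Function.LeftInverse.injective (LinearMap.congr_fun hl),
      Function.RightInverse.surjective (LinearMap.congr_fun hr)⟩
  refine ⟨hbij, hμ, ?_, ?_, ?_⟩
  · rw [hμ, LinearMap.ker_comp, Submodule.map_comap_eq_of_surjective hbij.2]
  · refine tensor_hom_ext 𝒜 fun p q a ha b hb => ?_
    rw [LinearMap.comp_apply, hφ p q a ha b hb, map_smul, hver p q a ha b hb,
      hverθ p q a ha b hb, hstp p q a ha b hb, TensorProduct.smul_tmul']
  · apply le_antisymm
    · rw [Submodule.map_span, Submodule.span_le]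
      rintro _ ⟨_, ⟨a, a', g, hg, rfl⟩, rfl⟩
      rw [SetLike.mem_coe]
      induction a using DirectSum.Decomposition.inductionOn 𝒜 with
      | zero => simp
      | add a b iha ihb =>
        rw [map_add, TensorProduct.map_add_left, LinearMap.add_apply, map_add]
        exact add_mem iha ihb
      | homogeneous a =>
        induction a' using DirectSum.Decomposition.inductionOn 𝒜 with
        | zero => simp
        | add b c ihb ihc =>
          rw [map_add, TensorProduct.map_add_right, LinearMap.add_apply, map_add]
          exact add_mem ihb ihc
        | homogeneous a' =>
          rw [phi_act 𝒜 hstp hφ a.2 a'.2 hg]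
          exact Submodule.smul_mem _ _
            (Submodule.subset_span ⟨_, _, _, map_sig_mem 𝒜 θ _ hg, rfl⟩)
    · rw [Submodule.span_le]
      rintro _ ⟨a, a', g, hg, rfl⟩
      rw [SetLike.mem_coe]
      have hadd (a b : A) : LinearMap.mulLeft ℂ (a + b)
          = LinearMap.mulLeft ℂ a + LinearMap.mulLeft ℂ b := by ext; simp [add_mul]
      have hadd' (a b : A) : LinearMap.mulRight ℂ (a + b)
          = LinearMap.mulRight ℂ a + LinearMap.mulRight ℂ b := by ext; simp [mul_add]
      induction a using DirectSum.Decomposition.inductionOn 𝒜 with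
      | zero => simp
      | add a b iha ihb =>
        rw [hadd, TensorProduct.map_add_left, LinearMap.add_apply]
        exact add_mem iha ihb
      | @homogeneous p a =>
        induction a' using DirectSum.Decomposition.inductionOn 𝒜 with
        | zero => simp
        | add b c ihb ihc =>
          rw [hadd', TensorProduct.map_add_right, LinearMap.add_apply]
          exact add_mem ihb ihc
        | @homogeneous q a' =>
          have h := phi_act 𝒜 hstp hφ a.2 a'.2 (map_sig_mem 𝒜 θ (-(p - q)) hg)
          rw [map_sig_neg] at h
          -- The preimage is, up to a scalar, the deformed action on the `σ_{q-p}`-twist of `g`.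
          rw [← inv_smul_smul₀ (phase_ne_zero θ p q) (TensorProduct.map _ _ g), ← h]
          exact Submodule.smul_mem _ _ (Submodule.mem_map_of_mem
            (Submodule.subset_span ⟨_, _, _, map_sig_mem 𝒜 θ _ hg, rfl⟩))
end
end

section
/- The map φ_θ maps (Γ¹(A_θ))² bijectively onto (Γ¹(A))², and hence descends to a linear bijection φ̄_θ : Ω¹(A_θ) → Ω¹(A), which sends the class of a d_θ a' to e^{πiθ(m₁m₂'−m₂m₁')} a da' for ℤ²-homogeneous a of degree (m₁,m₂) and a' of degree (m₁',m₂'). Moreover v ∘ φ̄_θ = v_θ, i.e., φ̄_θ is compatible with the vertical lifts of the Kähler-type Atiyah sequences of the deformed and classical Hopf fibrations. -/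
/-!
Call a tensor `a ⊗ a'` with `a`, `a'` homogeneous of degrees `p`, `q` homogeneous of total degree
`p + q`. The map `φ_θ` is diagonal on homogeneous tensors with nonzero eigenvalues, hence injective,
and `μ_{A_θ} = μ_A ∘ φ_θ`, so `Γ¹(A_θ) = φ_θ⁻¹(Γ¹(A))`.

Comparing phases shows that on total degrees `r`, `s` the map `φ_θ` turns the braided product into
the ordinary product up to the scalar `phase θ r s` (`phi_bmul`). Both kernels are spanned by
elements of pure total degree: `Γ¹(A)` by the elements `a ⊗ a' - a a' ⊗ 1` (`ker_mul_eq_span`), and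
`Γ¹(A_θ)` by their preimages `(phase θ p q)⁻¹ (a ⊗ a') - a a' ⊗ 1`. As the scalars are nonzero, the
spans of products of these generators correspond under `φ_θ`, i.e. `φ_θ` maps `(Γ¹(A_θ))²` onto
`(Γ¹(A))²`.

For the vertical lifts, the Euler operator is a derivation, so `a ⊗ a' ↦ a E(a')` kills `(Γ¹(A))²`
(`vert_mul`); and `id ⊗ E`, being diagonal on homogeneous tensors, commutes with `φ_θ`, which gives
`v ∘ φ̄_θ = v_θ`.
-/

open scoped TensorProduct
noncomputable section

/-- The cotriangular structure phase `R_θ(t_u ⊗ t_w) = e^{−2πiθ(u₁w₂ − u₂w₁)}`. -/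
def rphase (θ : ℝ) (u w : ℤ × ℤ) : ℂ :=
  Complex.exp (-(Complex.I * ((2 * Real.pi * θ : ℝ) : ℂ) * ((u.1 * w.2 - u.2 * w.1 : ℤ) : ℂ)))

lemma phase_zero_right (θ : ℝ) (p : ℤ × ℤ) : phase θ p 0 = 1 := by simp [phase]

/-- The phase identity behind `phi_bmul`: the braiding phase, the two star-product phases and the
phase of `φ_θ` on the product combine to the phases of `φ_θ` on the factors and a phase depending
only on the two total degrees. -/
lemma phase_identity (θ : ℝ) (p p' u u' : ℤ × ℤ) :
    rphase θ u p' * phase θ p u * phase θ p' u' * phase θ (p + u) (p' + u')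
      = phase θ (p + p') (u + u') * phase θ p p' * phase θ u u' := by
  simp only [phase, rphase, ← Complex.exp_add]
  congr 1
  simp only [Prod.fst_add, Prod.snd_add]
  push_cast
  ring

section Graded

variable {A : Type} [CommRing A] [Algebra ℂ A] {𝒜 : ℤ × ℤ → Submodule ℂ A} [GradedAlgebra 𝒜]

lemma linearMap_ext_homogeneous {M : Type*} [AddCommMonoid M] [Module ℂ M] {f g : A →ₗ[ℂ] M}
    (h : ∀ p, ∀ a ∈ 𝒜 p, f a = g a) : f = g := by
  ext a
  induction a using DirectSum.Decomposition.inductionOn 𝒜 with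
  | zero => simp
  | homogeneous a => exact h _ _ a.2
  | add a b ha hb => simp [ha, hb]

lemma tensor_ext_homogeneous {M : Type*} [AddCommMonoid M] [Module ℂ M]
    {f g : A ⊗[ℂ] A →ₗ[ℂ] M}
    (h : ∀ p q, ∀ a ∈ 𝒜 p, ∀ b ∈ 𝒜 q, f (a ⊗ₜ[ℂ] b) = g (a ⊗ₜ[ℂ] b)) : f = g := by
  apply TensorProduct.ext
  refine linearMap_ext_homogeneous (𝒜 := 𝒜) fun p a ha => ?_
  refine linearMap_ext_homogeneous (𝒜 := 𝒜) fun q b hb => ?_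
  exact h p q a ha b hb

variable (𝒜) in
/-- Any family of scalars is realised by a linear map that is diagonal on homogeneous tensors. -/
lemma exists_diagonal (c : ℤ × ℤ → ℤ × ℤ → ℂ) :
    ∃ ψ : A ⊗[ℂ] A →ₗ[ℂ] A ⊗[ℂ] A, ∀ p q, ∀ a ∈ 𝒜 p, ∀ b ∈ 𝒜 q,
      ψ (a ⊗ₜ[ℂ] b) = c p q • (a ⊗ₜ[ℂ] b) := by
  let D := (DirectSum.decomposeLinearEquiv 𝒜).toLinearMap
  let β (p : ℤ × ℤ) : A →ₗ[ℂ] A →ₗ[ℂ] A ⊗[ℂ] A :=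
    (DirectSum.toModule ℂ (ℤ × ℤ) (A →ₗ[ℂ] A ⊗[ℂ] A) (fun q =>
      c p q • ((TensorProduct.mk ℂ A A).flip ∘ₗ (𝒜 q).subtype)) ∘ₗ D).flip
  refine ⟨TensorProduct.lift (DirectSum.toModule ℂ (ℤ × ℤ) (A →ₗ[ℂ] A ⊗[ℂ] A) (fun p =>
      β p ∘ₗ (𝒜 p).subtype) ∘ₗ D), fun p q a ha b hb => ?_⟩
  lift a to 𝒜 p using ha
  lift b to 𝒜 q using hb
  simp [D, β, DirectSum.toModule_lof]

lemma diagonal_injective {c : ℤ × ℤ → ℤ × ℤ → ℂ} (hc : ∀ p q, c p q ≠ 0)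
    {φ : A ⊗[ℂ] A →ₗ[ℂ] A ⊗[ℂ] A}
    (hφ : ∀ p q, ∀ a ∈ 𝒜 p, ∀ b ∈ 𝒜 q, φ (a ⊗ₜ[ℂ] b) = c p q • (a ⊗ₜ[ℂ] b)) :
    Function.Injective φ := by
  obtain ⟨ψ, hψ⟩ := exists_diagonal 𝒜 fun p q => (c p q)⁻¹
  have h : ψ ∘ₗ φ = LinearMap.id :=
    tensor_ext_homogeneous (𝒜 := 𝒜) fun p q a ha b hb => by
      simp [hφ p q a ha b hb, hψ p q a ha b hb, smul_smul, hc p q]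
  exact Function.LeftInverse.injective (g := ψ) fun x => LinearMap.congr_fun h x

variable (𝒜) in
/-- The part of `A ⊗ A` of total degree `r`. -/
def totalDegree (r : ℤ × ℤ) : Submodule ℂ (A ⊗[ℂ] A) :=
  Submodule.span ℂ {x | ∃ p q, p + q = r ∧ ∃ a ∈ 𝒜 p, ∃ b ∈ 𝒜 q, x = a ⊗ₜ[ℂ] b}

lemma tmul_mem_totalDegree {p q r : ℤ × ℤ} (hr : p + q = r) {a b : A} (ha : a ∈ 𝒜 p)
    (hb : b ∈ 𝒜 q) : a ⊗ₜ[ℂ] b ∈ totalDegree 𝒜 r :=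
  Submodule.subset_span ⟨p, q, hr, a, ha, b, hb, rfl⟩

/-- `φ_θ` intertwines the braided product with the ordinary one, up to a phase depending only on
the total degrees. -/
lemma phi_bmul {θ : ℝ} {stp : A →ₗ[ℂ] A →ₗ[ℂ] A}
    (hstp : ∀ (p q : ℤ × ℤ), ∀ a ∈ 𝒜 p, ∀ a' ∈ 𝒜 q, stp a a' = phase θ p q • (a * a'))
    {φ : A ⊗[ℂ] A →ₗ[ℂ] A ⊗[ℂ] A}
    (hφ : ∀ (p q : ℤ × ℤ), ∀ a ∈ 𝒜 p, ∀ a' ∈ 𝒜 q,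
      φ (a ⊗ₜ[ℂ] a') = phase θ p q • (a ⊗ₜ[ℂ] a'))
    {bmul : A ⊗[ℂ] A →ₗ[ℂ] A ⊗[ℂ] A →ₗ[ℂ] A ⊗[ℂ] A}
    (hbmul : ∀ (p p' u u' : ℤ × ℤ), ∀ a ∈ 𝒜 p, ∀ a' ∈ 𝒜 p', ∀ c ∈ 𝒜 u, ∀ c' ∈ 𝒜 u',
      bmul (a ⊗ₜ[ℂ] a') (c ⊗ₜ[ℂ] c')
        = rphase θ u p' • ((stp a c) ⊗ₜ[ℂ] (stp a' c')))
    {r s : ℤ × ℤ} {x y : A ⊗[ℂ] A} (hx : x ∈ totalDegree 𝒜 r) (hy : y ∈ totalDegree 𝒜 s) :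
    φ (bmul x y) = phase θ r s • (φ x * φ y) := by
  induction hx, hy using Submodule.span_induction₂ with
  | mem_mem x y hx hy =>
    obtain ⟨p, p', rfl, a, ha, a', ha', rfl⟩ := hx
    obtain ⟨u, u', rfl, c, hc, c', hc', rfl⟩ := hy
    rw [hbmul p p' u u' a ha a' ha' c hc c' hc', hstp p u a ha c hc, hstp p' u' a' ha' c' hc',
      hφ p p' a ha a' ha', hφ u u' c hc c' hc']
    simp only [TensorProduct.smul_tmul', TensorProduct.tmul_smul, smul_mul_smul_comm,
      Algebra.TensorProduct.tmul_mul_tmul]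
    simp only [← TensorProduct.smul_tmul', map_smul,
      hφ _ _ _ (SetLike.mul_mem_graded ha hc) _ (SetLike.mul_mem_graded ha' hc'), smul_smul]
    congr 1
    linear_combination phase_identity θ p p' u u'
  | zero_left y hy => simp
  | zero_right x hx => simp
  | add_left x y z _ _ _ h₁ h₂ => simp [h₁, h₂, add_mul]
  | add_right x y z _ _ _ h₁ h₂ => simp [h₁, h₂, mul_add]
  | smul_left c x y _ _ h => simp [h, smul_comm c]
  | smul_right c x y _ _ h => simp [h, smul_comm c]

variable (𝒜) in
/-- Generators of `Γ¹(A)` of pure total degree: a tensor `∑ aᵢ ⊗ bᵢ` in the kernel equals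
`∑ (aᵢ ⊗ bᵢ - aᵢ bᵢ ⊗ 1)`. -/
lemma ker_mul_eq_span :
    LinearMap.ker (LinearMap.mul' ℂ A) = Submodule.span ℂ
      {x | ∃ p q, ∃ a ∈ 𝒜 p, ∃ b ∈ 𝒜 q, x = a ⊗ₜ[ℂ] b - (a * b) ⊗ₜ[ℂ] (1 : A)} := by
  set S : Set (A ⊗[ℂ] A) :=
    {x | ∃ p q, ∃ a ∈ 𝒜 p, ∃ b ∈ 𝒜 q, x = a ⊗ₜ[ℂ] b - (a * b) ⊗ₜ[ℂ] (1 : A)}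
  apply le_antisymm
  · intro x hx
    let f : A ⊗[ℂ] A →ₗ[ℂ] A ⊗[ℂ] A :=
      LinearMap.id - (TensorProduct.mk ℂ A A).flip 1 ∘ₗ LinearMap.mul' ℂ A
    have hf : (Submodule.span ℂ S).mkQ ∘ₗ f = 0 :=
      tensor_ext_homogeneous (𝒜 := 𝒜) fun p q a ha b hb => by
        simp only [LinearMap.comp_apply, LinearMap.zero_apply, Submodule.mkQ_apply,
          Submodule.Quotient.mk_eq_zero]
        exact Submodule.subset_span ⟨p, q, a, ha, b, hb, by simp [f]⟩
    have h := LinearMap.congr_fun hf x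
    have hx' : LinearMap.mul' ℂ A x = 0 := hx
    simpa [f, hx', Submodule.Quotient.mk_eq_zero] using h
  · rw [Submodule.span_le]
    rintro _ ⟨p, q, a, -, b, -, rfl⟩
    simp

lemma euler_mul {Euler : A →ₗ[ℂ] A}
    (hEuler : ∀ (p : ℤ × ℤ), ∀ a ∈ 𝒜 p, Euler a = ((p.1 + p.2 : ℤ) : ℂ) • a) (a b : A) :
    Euler (a * b) = Euler a * b + a * Euler b := by
  have h : Euler ∘ₗ LinearMap.mul' ℂ A
      = LinearMap.mul' ℂ A ∘ₗ (TensorProduct.map Euler LinearMap.id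
        + TensorProduct.map LinearMap.id Euler) :=
    tensor_ext_homogeneous (𝒜 := 𝒜) fun p q a ha b hb => by
      simp only [LinearMap.comp_apply, LinearMap.add_apply, TensorProduct.map_tmul,
        LinearMap.id_apply, map_add, LinearMap.mul'_apply, hEuler p a ha, hEuler q b hb,
        hEuler _ _ (SetLike.mul_mem_graded ha hb), smul_mul_assoc, mul_smul_comm, ← add_smul]
      congr 1
      simp only [Prod.fst_add, Prod.snd_add]
      push_cast
      ring
  simpa using LinearMap.congr_fun h (a ⊗ₜ[ℂ] b)

/-- For a derivation `E`, the lift `a ⊗ b ↦ a E(b)` is a derivation along the multiplication map;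
in particular it vanishes on products of two elements of `Γ¹(A)`. -/
lemma vert_mul {E : A →ₗ[ℂ] A} (hE : ∀ a b, E (a * b) = E a * b + a * E b)
    (x y : A ⊗[ℂ] A) :
    LinearMap.mul' ℂ A (TensorProduct.map LinearMap.id E (x * y))
      = LinearMap.mul' ℂ A x * LinearMap.mul' ℂ A (TensorProduct.map LinearMap.id E y)
        + LinearMap.mul' ℂ A (TensorProduct.map LinearMap.id E x) * LinearMap.mul' ℂ A y := by
  induction x using TensorProduct.induction_on with
  | zero => simp
  | add x₁ x₂ h₁ h₂ => simp only [add_mul, map_add, h₁, h₂]; ring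
  | tmul a b =>
    induction y using TensorProduct.induction_on with
    | zero => simp
    | add y₁ y₂ h₁ h₂ => simp only [mul_add, map_add, h₁, h₂]; ring
    | tmul c d => simp [hE]; ring

end Graded

/-- `φ_θ` maps the braided square `(Γ¹(A_θ))²` bijectively onto `(Γ¹(A))²`
and hence descends to a linear bijection `φ̄_θ : Ω¹(A_θ) → Ω¹(A)`, sending the class of
`a d_θ a'` to `e^{πiθ(m₁m₂'−m₂m₁')}` times the class of `a da'` for homogeneous `a, a'`;
moreover `v ∘ φ̄_θ = v_θ` for the vertical lifts of the Kähler-type Atiyah sequences. -/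
theorem kaehler_atiyah_sequences_isomorphic
    (A : Type) [CommRing A] [Algebra ℂ A]
    (𝒜 : ℤ × ℤ → Submodule ℂ A) [GradedAlgebra 𝒜]
    (z1 z2 z1s z2s : A)
    (hz1 : z1 ∈ 𝒜 (1, 0)) (hz2 : z2 ∈ 𝒜 (0, 1))
    (hz1s : z1s ∈ 𝒜 (-1, 0)) (hz2s : z2s ∈ 𝒜 (0, -1))
    (hrel : z1s * z1 + z2s * z2 = 1)
    (huniv : ∀ (C : Type) [CommRing C] [Algebra ℂ C] (w1 w2 w1s w2s : C),
      w1s * w1 + w2s * w2 = 1 →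
      ∃! f : A →ₐ[ℂ] C, f z1 = w1 ∧ f z2 = w2 ∧ f z1s = w1s ∧ f z2s = w2s)
    (θ : ℝ)
    (stp : A →ₗ[ℂ] A →ₗ[ℂ] A)
    (hstp : ∀ (p q : ℤ × ℤ), ∀ a ∈ 𝒜 p, ∀ a' ∈ 𝒜 q, stp a a' = phase θ p q • (a * a'))
    -- the cocycle phase map `φ_θ` on `A ⊗ A`
    (φ : A ⊗[ℂ] A →ₗ[ℂ] A ⊗[ℂ] A)
    (hφ : ∀ (p q : ℤ × ℤ), ∀ a ∈ 𝒜 p, ∀ a' ∈ 𝒜 q,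
      φ (a ⊗ₜ[ℂ] a') = phase θ p q • (a ⊗ₜ[ℂ] a'))
    -- the braided product on `A ⊗ A`
    (bmul : A ⊗[ℂ] A →ₗ[ℂ] A ⊗[ℂ] A →ₗ[ℂ] A ⊗[ℂ] A)
    (hbmul : ∀ (p p' u u' : ℤ × ℤ), ∀ a ∈ 𝒜 p, ∀ a' ∈ 𝒜 p', ∀ c ∈ 𝒜 u, ∀ c' ∈ 𝒜 u',
      bmul (a ⊗ₜ[ℂ] a') (c ⊗ₜ[ℂ] c')
        = rphase θ u p' • ((stp a c) ⊗ₜ[ℂ] (stp a' c')))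
    -- the Euler operator, multiplying total-degree-`n` elements by `n`
    (Euler : A →ₗ[ℂ] A)
    (hEuler : ∀ (p : ℤ × ℤ), ∀ a ∈ 𝒜 p, Euler a = ((p.1 + p.2 : ℤ) : ℂ) • a) :
    -- notation: `K = Γ¹(A)`, `Kθ = Γ¹(A_θ)`, `K2 = (Γ¹(A))²`, `K2θ = (Γ¹(A_θ))²`
    ∀ (K Kθ K2 K2θ : Submodule ℂ (A ⊗[ℂ] A)),
      K = LinearMap.ker (LinearMap.mul' ℂ A) →
      Kθ = LinearMap.ker (TensorProduct.lift stp) →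
      K2 = K * K →
      K2θ = Submodule.span ℂ {y : A ⊗[ℂ] A | ∃ x ∈ Kθ, ∃ x' ∈ Kθ, y = bmul x x'} →
      -- `φ_θ` maps `(Γ¹(A_θ))²` bijectively onto `(Γ¹(A))²`
      (Set.BijOn φ K2θ K2 ∧ Submodule.map φ K2θ = K2) ∧
      -- `φ_θ` descends to a linear bijection `φ̄_θ : Ω¹(A_θ) → Ω¹(A)` with the stated
      -- formula, compatible with the vertical lifts `v` and `v_θ`
      (∃ φbar : ((A ⊗[ℂ] A) ⧸ K2θ) →ₗ[ℂ] ((A ⊗[ℂ] A) ⧸ K2),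
        (∀ x : A ⊗[ℂ] A, φbar (K2θ.mkQ x) = K2.mkQ (φ x)) ∧
        Set.BijOn φbar (Submodule.map K2θ.mkQ Kθ) (Submodule.map K2.mkQ K) ∧
        (∀ (p q : ℤ × ℤ), ∀ a ∈ 𝒜 p, ∀ a' ∈ 𝒜 q,
          φbar (K2θ.mkQ ((stp a 1) ⊗ₜ[ℂ] a' - (stp a a') ⊗ₜ[ℂ] (1 : A)))
            = phase θ p q • K2.mkQ (a ⊗ₜ[ℂ] a' - (a * a') ⊗ₜ[ℂ] (1 : A))) ∧
        (∃ (vbar : ((A ⊗[ℂ] A) ⧸ K2) →ₗ[ℂ] A) (vθbar : ((A ⊗[ℂ] A) ⧸ K2θ) →ₗ[ℂ] A),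
          (∀ x : A ⊗[ℂ] A, vbar (K2.mkQ x)
            = LinearMap.mul' ℂ A (TensorProduct.map LinearMap.id Euler x)) ∧
          (∀ x : A ⊗[ℂ] A, vθbar (K2θ.mkQ x)
            = TensorProduct.lift stp (TensorProduct.map LinearMap.id Euler x)) ∧
          vbar.comp φbar = vθbar)) := by
  intro K Kθ K2 K2θ hK hKθ hK2 hK2θ
  have hinj : Function.Injective φ := diagonal_injective (𝒜 := 𝒜) (phase_ne_zero θ) hφ
  have hlift : TensorProduct.lift stp = LinearMap.mul' ℂ A ∘ₗ φ :=
    tensor_ext_homogeneous (𝒜 := 𝒜) fun p q a ha b hb => by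
      simp [hφ p q a ha b hb, hstp p q a ha b hb]
  have hone : ∀ a : A, φ (a ⊗ₜ[ℂ] (1 : A)) = a ⊗ₜ[ℂ] (1 : A) := by
    have h : φ ∘ₗ (TensorProduct.mk ℂ A A).flip 1 = (TensorProduct.mk ℂ A A).flip 1 :=
      linearMap_ext_homogeneous (𝒜 := 𝒜) fun p a ha => by
        simpa [phase_zero_right] using hφ p 0 a ha 1 SetLike.GradedOne.one_mem
    exact fun a => LinearMap.congr_fun h a
  have hstp1 : ∀ p, ∀ a ∈ 𝒜 p, stp a 1 = a := fun p a ha => by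
    simpa [phase_zero_right] using hstp p 0 a ha 1 SetLike.GradedOne.one_mem
  have hKθ' : Kθ = K.comap φ := by rw [hKθ, hK, hlift, LinearMap.ker_comp]
  -- The preimages under `φ` of the homogeneous generators of `K`.
  let T : Set (A ⊗[ℂ] A) := {x | ∃ p q, ∃ a ∈ 𝒜 p, ∃ b ∈ 𝒜 q,
    x = (phase θ p q)⁻¹ • (a ⊗ₜ[ℂ] b) - (a * b) ⊗ₜ[ℂ] (1 : A)}
  have hT : ∀ t ∈ T, ∃ r, t ∈ totalDegree 𝒜 r := by
    rintro _ ⟨p, q, a, ha, b, hb, rfl⟩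
    exact ⟨p + q, sub_mem (Submodule.smul_mem _ _ (tmul_mem_totalDegree rfl ha hb))
      (tmul_mem_totalDegree (add_zero _) (SetLike.mul_mem_graded ha hb)
        SetLike.GradedOne.one_mem)⟩
  have hφT : ∀ p q, ∀ a ∈ 𝒜 p, ∀ b ∈ 𝒜 q,
      φ ((phase θ p q)⁻¹ • (a ⊗ₜ[ℂ] b) - (a * b) ⊗ₜ[ℂ] (1 : A))
        = a ⊗ₜ[ℂ] b - (a * b) ⊗ₜ[ℂ] (1 : A) := fun p q a ha b hb => by
    rw [map_sub, map_smul, hφ p q a ha b hb, hone, smul_smul,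
      inv_mul_cancel₀ (phase_ne_zero θ p q), one_smul]
  have hKT : K = Submodule.span ℂ (φ '' T) := by
    rw [hK, ker_mul_eq_span 𝒜]
    congr 1
    ext x
    constructor
    · rintro ⟨p, q, a, ha, b, hb, rfl⟩
      exact ⟨_, ⟨p, q, a, ha, b, hb, rfl⟩, hφT p q a ha b hb⟩
    · rintro ⟨_, ⟨p, q, a, ha, b, hb, rfl⟩, rfl⟩
      exact ⟨p, q, a, ha, b, hb, hφT p q a ha b hb⟩
  have hKθT : Kθ = Submodule.span ℂ T := by
    rw [hKθ', hKT, ← Submodule.map_span, Submodule.comap_map_eq_of_injective hinj]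
  have hmapK : Kθ.map φ = K := by rw [hKθT, Submodule.map_span, ← hKT]
  have hbT : ∀ t ∈ T, ∀ t' ∈ T, ∃ c : ℂ, c ≠ 0 ∧ φ (bmul t t') = c • (φ t * φ t') := by
    intro t ht t' ht'
    obtain ⟨r, hr⟩ := hT t ht
    obtain ⟨s, hs⟩ := hT t' ht'
    exact ⟨_, phase_ne_zero θ r s, phi_bmul hstp hφ hbmul hr hs⟩
  have hmap : Submodule.map φ K2θ = K2 := by
    apply le_antisymm
    · rw [hK2θ, Submodule.map_span, Submodule.span_le]
      rintro _ ⟨_, ⟨x, hx, x', hx', rfl⟩, rfl⟩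
      rw [hKθT] at hx hx'
      change φ (bmul x x') ∈ K2
      induction hx, hx' using Submodule.span_induction₂ with
      | mem_mem t t' ht ht' =>
        obtain ⟨c, -, h⟩ := hbT t ht t' ht'
        rw [h, hK2, hKT]
        exact Submodule.smul_mem _ _ (Submodule.mul_mem_mul
          (Submodule.subset_span ⟨t, ht, rfl⟩) (Submodule.subset_span ⟨t', ht', rfl⟩))
      | zero_left y hy => simp
      | zero_right x hx => simp
      | add_left x y z _ _ _ h₁ h₂ => simpa using add_mem h₁ h₂
      | add_right x y z _ _ _ h₁ h₂ => simpa using add_mem h₁ h₂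
      | smul_left c x y _ _ h => simpa using Submodule.smul_mem _ c h
      | smul_right c x y _ _ h => simpa using Submodule.smul_mem _ c h
    · rw [hK2, hKT, Submodule.span_mul_span, Submodule.span_le]
      rintro _ ⟨_, ⟨t, ht, rfl⟩, _, ⟨t', ht', rfl⟩, rfl⟩
      obtain ⟨c, hc, h⟩ := hbT t ht t' ht'
      refine ⟨c⁻¹ • bmul t t', Submodule.smul_mem _ _ ?_, ?_⟩
      · rw [hK2θ, hKθT]
        exact Submodule.subset_span
          ⟨t, Submodule.subset_span ht, t', Submodule.subset_span ht', rfl⟩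
      · simp [h, smul_smul, hc]
  have hcomap : K2θ = K2.comap φ := by
    rw [← hmap, Submodule.comap_map_eq_of_injective hinj]
  refine ⟨⟨⟨fun x hx => ?_, hinj.injOn, fun y hy => ?_⟩, hmap⟩, ?_⟩
  · rw [← hmap]
    exact ⟨x, hx, rfl⟩
  · rw [← hmap] at hy
    exact hy
  let φbar := Submodule.mapQ K2θ K2 φ hcomap.le
  have hφbar : ∀ x, φbar (K2θ.mkQ x) = K2.mkQ (φ x) := fun x => rfl
  have hφbar_inj : Function.Injective φbar := by
    rw [injective_iff_map_eq_zero]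
    intro y hy
    obtain ⟨x, rfl⟩ := K2θ.mkQ_surjective y
    rw [hφbar, Submodule.mkQ_apply, Submodule.Quotient.mk_eq_zero] at hy
    rw [Submodule.mkQ_apply, Submodule.Quotient.mk_eq_zero, hcomap]
    exact hy
  refine ⟨φbar, hφbar, ⟨?_, hφbar_inj.injOn, ?_⟩, ?_, ?_⟩
  · rintro _ ⟨x, hx, rfl⟩
    exact ⟨φ x, hmapK ▸ ⟨x, hx, rfl⟩, rfl⟩
  · rintro _ ⟨y, hy, rfl⟩
    rw [← hmapK] at hy
    obtain ⟨x, hx, rfl⟩ := hy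
    exact ⟨K2θ.mkQ x, ⟨x, hx, rfl⟩, rfl⟩
  · intro p q a ha a' ha'
    rw [hφbar, hstp1 p a ha, hstp p q a ha a' ha', map_sub, hφ p q a ha a' ha', hone,
      ← TensorProduct.smul_tmul', ← smul_sub, map_smul]
  · have hv : K2 ≤ LinearMap.ker
        (LinearMap.mul' ℂ A ∘ₗ TensorProduct.map LinearMap.id Euler) := by
      rw [hK2, Submodule.mul_le]
      intro x hx y hy
      rw [hK, LinearMap.mem_ker] at hx hy
      rw [LinearMap.mem_ker, LinearMap.comp_apply, vert_mul (euler_mul hEuler), hx, hy]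
      simp
    have hcomm : TensorProduct.map LinearMap.id Euler ∘ₗ φ
        = φ ∘ₗ TensorProduct.map LinearMap.id Euler :=
      tensor_ext_homogeneous (𝒜 := 𝒜) fun p q a ha b hb => by
        simp [hφ p q a ha b hb, hEuler q b hb, smul_comm (phase θ p q)]
    refine ⟨K2.liftQ _ hv, (K2.liftQ _ hv).comp φbar, fun x => rfl, fun x => ?_, rfl⟩
    rw [hlift]
    exact congrArg (LinearMap.mul' ℂ A) (LinearMap.congr_fun hcomm x)
end
end
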